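/- arXiv:1803.06968 — 6 statements merged into one kernel-verified Lean document; each statement's English description precedes it below -/
import Mathlib

section
/- Let d ≥ 2 and let α_1, …, α_{d−1} ∈ ℝ. Let L_1, …, L_{d−1} be linearly independent linear forms of d−1 variables with real coefficients, and suppose there exist constants C > 0 and γ < 1 such that for every n ∈ ℤ^{d−1}, n ≠ 0, ‖α_1 n_1 + ⋯ + α_{d−1} n_{d−1}‖ · ∏_{k=1}^{d−1} (|L_k(n)| + 1) ≥ C |n|^{−γ}. Then the series Σ_{n ∈ ℤ^{d−1}, n ≠ 0} 1/(|n| · ∏_{k=1}^{d−1} (|L_k(n)| + 1) · ‖α_1 n_1 + ⋯ + α_{d−1} n_{d−1}‖) converges. -/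
open Real

/-- Distance from a real number to the nearest integer. -/
noncomputable def nint (x : ℝ) : ℝ := |x - round x|

/-- Euclidean norm of an integer vector. -/
noncomputable def znorm {m : ℕ} (n : Fin m → ℤ) : ℝ := Real.sqrt (∑ i, ((n i : ℝ)) ^ 2)

/-- A nonnegative function is summable if its finite sums over each fibre of a map are bounded by
a summable function of the base point. -/
theorem summable_of_sum_fiber_le {ι κ : Type*} {f : ι → ℝ} {g : κ → ℝ} (φ : ι → κ)
    (hf : ∀ x, 0 ≤ f x) (hg : Summable g) (hg0 : ∀ a, 0 ≤ g a)
    (h : ∀ (a : κ) (S : Finset ι), (∀ x ∈ S, φ x = a) → ∑ x ∈ S, f x ≤ g a) :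
    Summable f := by
  classical
  refine summable_of_sum_le (c := ∑' a, g a) hf fun S => ?_
  rw [← Finset.sum_fiberwise_of_maps_to (s := S) (t := S.image φ) (g := φ)
    (fun x hx => Finset.mem_image_of_mem φ hx)]
  refine (Finset.sum_le_sum fun a _ => h a _ fun x hx => (Finset.mem_filter.1 hx).2).trans ?_
  exact hg.sum_le_tsum _ fun a _ => hg0 a

theorem summable_pi_prod_geometric {m : ℕ} {r : ℝ} (hr0 : 0 ≤ r) (hr1 : r < 1) :
    Summable (fun a : Fin m → ℕ => ∏ k, r ^ a k) := by
  classical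
  refine summable_of_sum_le (c := ∏ _k : Fin m, ∑' j : ℕ, r ^ j)
    (fun a => Finset.prod_nonneg fun k _ => pow_nonneg hr0 _) fun S => ?_
  have hsub : S ⊆ Fintype.piFinset fun k => S.image fun a => a k := fun a ha =>
    Fintype.mem_piFinset.2 fun k => Finset.mem_image_of_mem (fun a : Fin m → ℕ => a k) ha
  refine (Finset.sum_le_sum_of_subset_of_nonneg hsub fun a _ _ =>
    Finset.prod_nonneg fun k _ => pow_nonneg hr0 _).trans ?_
  rw [← Finset.prod_univ_sum (fun k => S.image fun a => a k) fun _ j => r ^ j]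
  exact Finset.prod_le_prod (fun k _ => Finset.sum_nonneg fun j _ => pow_nonneg hr0 _)
    fun k _ => (summable_geometric_of_lt_one hr0 hr1).sum_le_tsum _ fun j _ => pow_nonneg hr0 _

theorem nint_nonneg (x : ℝ) : 0 ≤ nint x := abs_nonneg _

theorem nint_le_abs_sub_intCast (x : ℝ) (k : ℤ) : nint x ≤ |x - k| := round_le x k

/-- If the values of `f` are `δ`-separated modulo `1` and `δ`-far from the integers, the sum of
the reciprocals of their distances to the integers is at most of order `δ ^ (-(1 + ε))`. -/
theorem exists_sum_inv_nint_le {ε : ℝ} (hε : 0 < ε) :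
    ∃ Z : ℝ, 0 ≤ Z ∧ ∀ {ι : Type} (S : Finset ι) (f : ι → ℝ) (δ : ℝ), 0 < δ →
      (∀ x ∈ S, δ ≤ nint (f x)) →
      (∀ x ∈ S, ∀ y ∈ S, x ≠ y → δ ≤ nint (f x - f y)) →
      ∑ x ∈ S, (nint (f x))⁻¹ ≤ Z * δ ^ (-(1 + ε)) := by
  classical
  have hs := Real.summable_abs_int_rpow (b := 1 + ε) (by linarith)
  have hk0 : ∀ k : ℤ, 0 ≤ |(k : ℝ)| ^ (-(1 + ε)) := fun k => rpow_nonneg (abs_nonneg _) _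
  refine ⟨(1 / 2 : ℝ) ^ (-(1 + ε)) * ∑' k : ℤ, |(k : ℝ)| ^ (-(1 + ε)),
    mul_nonneg (by positivity) (tsum_nonneg hk0), ?_⟩
  intro ι S f δ hδ hfar hsep
  set v : ι → ℝ := fun x => f x - round (f x) with hv
  set q : ι → ℤ := fun x => ⌊v x / δ⌋
  have hqle : ∀ x, (q x : ℝ) * δ ≤ v x := fun x => (le_div_iff₀ hδ).1 (Int.floor_le _)
  have hqlt : ∀ x, v x < ((q x : ℝ) + 1) * δ := fun x =>
    (div_lt_iff₀ hδ).1 (Int.lt_floor_add_one _)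
  have hinj : Set.InjOn q S := by
    intro x hx y hy hxy
    by_contra hne
    have h1 := hsep x hx y hy hne
    have h2 := nint_le_abs_sub_intCast (f x - f y) (round (f x) - round (f y))
    have h3 : |f x - f y - ((round (f x) - round (f y) : ℤ) : ℝ)| < δ := by
      have e : f x - f y - ((round (f x) - round (f y) : ℤ) : ℝ) = v x - v y := by
        simp only [hv]; push_cast; ring
      have a1 := hqle x
      have a2 := hqlt x
      have a3 := hqle y
      have a4 := hqlt y
      rw [hxy] at a1 a2
      rw [e, abs_lt]
      constructor <;> linarith
    linarith
  have hterm : ∀ x ∈ S, (nint (f x))⁻¹ ≤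
      (1 / 2 : ℝ) ^ (-(1 + ε)) * δ ^ (-(1 + ε)) * |(q x : ℝ)| ^ (-(1 + ε)) := by
    intro x hx
    have hd : δ ≤ |v x| := hfar x hx
    have hpos : 0 < |v x| := hδ.trans_le hd
    have hle1 : |v x| ≤ 1 := (abs_sub_round (f x)).trans (by norm_num)
    have a1 := hqle x
    have a2 := hqlt x
    have hlow : 1 / 2 * δ * |(q x : ℝ)| ≤ |v x| ∧ 0 < |(q x : ℝ)| := by
      rcases lt_trichotomy (q x) 0 with hneg | h0 | hp
      · have h' : (q x : ℝ) ≤ -1 := by exact_mod_cast Int.le_sub_one_of_lt hneg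
        refine ⟨?_, abs_pos.2 (by linarith)⟩
        have hvn : v x ≤ 0 := by nlinarith
        rw [abs_of_nonpos hvn] at hd ⊢
        rw [abs_of_neg (by linarith)]
        nlinarith
      · exfalso
        rw [h0] at a1 a2
        simp only [Int.cast_zero, zero_mul, zero_add, one_mul] at a1 a2
        rw [abs_of_nonneg a1] at hd
        linarith
      · have h' : (1 : ℝ) ≤ q x := by exact_mod_cast hp
        refine ⟨?_, abs_pos.2 (by linarith)⟩
        have hvn : 0 ≤ v x := by nlinarith
        rw [abs_of_nonneg hvn, abs_of_pos (by linarith)]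
        nlinarith
    calc (nint (f x))⁻¹ = |v x| ^ (-1 : ℝ) := by rw [rpow_neg_one]; rfl
      _ ≤ |v x| ^ (-(1 + ε)) := rpow_le_rpow_of_exponent_ge hpos hle1 (by linarith)
      _ ≤ (1 / 2 * δ * |(q x : ℝ)|) ^ (-(1 + ε)) :=
        rpow_le_rpow_of_nonpos (mul_pos (by positivity) hlow.2) hlow.1 (by linarith)
      _ = _ := by
        rw [mul_rpow (by positivity) (abs_nonneg _), mul_rpow (by norm_num) hδ.le]
  calc ∑ x ∈ S, (nint (f x))⁻¹
      ≤ ∑ x ∈ S, (1 / 2 : ℝ) ^ (-(1 + ε)) * δ ^ (-(1 + ε)) * |(q x : ℝ)| ^ (-(1 + ε)) :=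
        Finset.sum_le_sum hterm
    _ = (1 / 2 : ℝ) ^ (-(1 + ε)) * δ ^ (-(1 + ε)) *
          ∑ k ∈ S.image q, |(k : ℝ)| ^ (-(1 + ε)) := by
        rw [Finset.sum_image hinj, Finset.mul_sum]
    _ ≤ (1 / 2 : ℝ) ^ (-(1 + ε)) * δ ^ (-(1 + ε)) * ∑' k : ℤ, |(k : ℝ)| ^ (-(1 + ε)) :=
        mul_le_mul_of_nonneg_left (hs.sum_le_tsum _ fun k _ => hk0 k) (by positivity)
    _ = _ := by ring

theorem znorm_nonneg {m : ℕ} (n : Fin m → ℤ) : 0 ≤ znorm n := Real.sqrt_nonneg _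

theorem abs_le_znorm {m : ℕ} (n : Fin m → ℤ) (i : Fin m) : |(n i : ℝ)| ≤ znorm n :=
  Real.abs_le_sqrt (Finset.single_le_sum (f := fun i => ((n i : ℝ)) ^ 2)
    (fun _ _ => sq_nonneg _) (Finset.mem_univ i))

theorem one_le_znorm {m : ℕ} {n : Fin m → ℤ} (hn : n ≠ 0) : 1 ≤ znorm n := by
  obtain ⟨i, hi⟩ := Function.ne_iff.1 hn
  refine le_trans ?_ (abs_le_znorm n i)
  exact_mod_cast Int.one_le_abs hi

theorem znorm_le_sum_abs {m : ℕ} (n : Fin m → ℤ) : znorm n ≤ ∑ i, |(n i : ℝ)| := by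
  refine Real.sqrt_le_iff.2 ⟨Finset.sum_nonneg fun _ _ => abs_nonneg _, ?_⟩
  have h := Finset.sum_sq_le_sq_sum_of_nonneg (s := Finset.univ) (f := fun i => |(n i : ℝ)|)
    fun i _ => abs_nonneg _
  simpa only [sq_abs] using h

theorem exists_abs_form_add_one_le {m : ℕ} (L : Fin m → Fin m → ℝ) :
    ∃ K : ℝ, 1 ≤ K ∧ ∀ n : Fin m → ℤ, n ≠ 0 → ∀ k,
      |∑ i, L k i * (n i : ℝ)| + 1 ≤ K * znorm n := by
  refine ⟨(∑ k, ∑ i, |L k i|) + 1, le_add_of_nonneg_left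
    (Finset.sum_nonneg fun _ _ => Finset.sum_nonneg fun _ _ => abs_nonneg _), ?_⟩
  intro n hn k
  rw [add_mul, one_mul]
  refine add_le_add ?_ (one_le_znorm hn)
  calc |∑ i, L k i * (n i : ℝ)| ≤ ∑ i, |L k i| * znorm n :=
        (Finset.abs_sum_le_sum_abs _ _).trans (Finset.sum_le_sum fun i _ => by
          rw [abs_mul]
          exact mul_le_mul_of_nonneg_left (abs_le_znorm n i) (abs_nonneg _))
    _ = (∑ i, |L k i|) * znorm n := by rw [Finset.sum_mul]
    _ ≤ _ := mul_le_mul_of_nonneg_right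
        (Finset.single_le_sum (f := fun k => ∑ i, |L k i|)
          (fun _ _ => Finset.sum_nonneg fun _ _ => abs_nonneg _) (Finset.mem_univ k))
        (znorm_nonneg n)

/-- Linearly independent forms control the Euclidean norm. -/
theorem exists_znorm_le_of_abs_form_le {m : ℕ} {L : Fin m → Fin m → ℝ}
    (hL : LinearIndependent ℝ L) :
    ∃ K : ℝ, 0 < K ∧ ∀ (n : Fin m → ℤ) (R : ℝ), 0 ≤ R →
      (∀ k, |∑ i, L k i * (n i : ℝ)| ≤ R) → znorm n ≤ K * R := by
  set M : Matrix (Fin m) (Fin m) ℝ := Matrix.of L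
  have hu : IsUnit M := Matrix.linearIndependent_rows_iff_isUnit.1 hL
  have hinv : M⁻¹ * M = 1 := Matrix.nonsing_inv_mul M ((Matrix.isUnit_iff_isUnit_det M).1 hu)
  refine ⟨(∑ i, ∑ k, |M⁻¹ i k|) + 1, add_pos_of_nonneg_of_pos
    (Finset.sum_nonneg fun _ _ => Finset.sum_nonneg fun _ _ => abs_nonneg _) one_pos, ?_⟩
  intro n R hR h
  have hx : ∀ i, (n i : ℝ) = ∑ k, M⁻¹ i k * ∑ l, L k l * (n l : ℝ) := by
    intro i
    have e : M⁻¹.mulVec (M.mulVec fun l => (n l : ℝ)) = fun l => (n l : ℝ) := by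
      rw [Matrix.mulVec_mulVec, hinv, Matrix.one_mulVec]
    exact (congrFun e i).symm
  calc znorm n ≤ ∑ i, |(n i : ℝ)| := znorm_le_sum_abs n
    _ ≤ ∑ i, ∑ k, |M⁻¹ i k| * R := Finset.sum_le_sum fun i _ => by
        rw [hx i]
        refine (Finset.abs_sum_le_sum_abs _ _).trans (Finset.sum_le_sum fun k _ => ?_)
        rw [abs_mul]
        exact mul_le_mul_of_nonneg_left (h k) (abs_nonneg _)
    _ = (∑ i, ∑ k, |M⁻¹ i k|) * R := by simp only [Finset.sum_mul]
    _ ≤ _ := by linarith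

theorem two_pow_sup_le {m : ℕ} {a : Fin m → ℕ} {Y : ℝ} (h1 : 1 ≤ Y)
    (h : ∀ k, (2 : ℝ) ^ a k ≤ Y) : (2 : ℝ) ^ Finset.univ.sup a ≤ Y :=
  Finset.sup_induction (p := fun t => (2 : ℝ) ^ t ≤ Y) (by simpa using h1)
    (fun x hx y hy => by rcases max_choice x y with e | e <;> rw [e] <;> assumption)
    fun k _ => h k

/-- Lower bound for the distance to the integers on a dyadic box. -/
theorem le_nint_of_abs_form_le {m : ℕ} {α : Fin m → ℝ} {L : Fin m → Fin m → ℝ}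
    {C γ K : ℝ} (hC : 0 < C) (hγ0 : 0 ≤ γ) (hK : 0 < K)
    (hbound : ∀ n : Fin m → ℤ, n ≠ 0 → C * znorm n ^ (-γ) ≤
        nint (∑ i, α i * (n i : ℝ)) * ∏ k, (|∑ i, L k i * (n i : ℝ)| + 1))
    (hnorm : ∀ (n : Fin m → ℤ) (R : ℝ), 0 ≤ R →
      (∀ k, |∑ i, L k i * (n i : ℝ)| ≤ R) → znorm n ≤ K * R)
    (a : Fin m → ℕ) (n : Fin m → ℤ) (hn : n ≠ 0)
    (h : ∀ k, |∑ i, L k i * (n i : ℝ)| + 1 ≤ 4 * 2 ^ a k) :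
    C * (4 * K) ^ (-γ) / 4 ^ m *
      2 ^ (-((∑ k, a k : ℕ) + γ * (Finset.univ.sup a : ℕ)) : ℝ) ≤
      nint (∑ i, α i * (n i : ℝ)) := by
  have hz : znorm n ≤ 4 * K * 2 ^ Finset.univ.sup a := by
    have := hnorm n (4 * 2 ^ Finset.univ.sup a) (by positivity) fun k => by
      have h1 := h k
      have h2 : (2 : ℝ) ^ a k ≤ 2 ^ Finset.univ.sup a :=
        pow_le_pow_right₀ one_le_two (Finset.le_sup (Finset.mem_univ k))
      linarith
    linarith
  have hz0 : 0 < znorm n := one_pos.trans_le (one_le_znorm hn)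
  have hP : ∏ k, (|∑ i, L k i * (n i : ℝ)| + 1) ≤ 4 ^ m * 2 ^ (∑ k, a k) := by
    refine (Finset.prod_le_prod (fun k _ => by positivity) fun k _ => h k).trans_eq ?_
    rw [Finset.prod_mul_distrib, Finset.prod_pow_eq_pow_sum]
    simp
  have hfin : C * (4 * K * 2 ^ Finset.univ.sup a) ^ (-γ) ≤
      nint (∑ i, α i * (n i : ℝ)) * (4 ^ m * 2 ^ (∑ k, a k)) :=
    (mul_le_mul_of_nonneg_left (rpow_le_rpow_of_nonpos hz0 hz (by linarith)) hC.le).trans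
      ((hbound n hn).trans (mul_le_mul_of_nonneg_left hP (nint_nonneg _)))
  rw [← div_le_iff₀ (by positivity)] at hfin
  refine le_of_eq_of_le ?_ hfin
  rw [mul_rpow (x := 4 * K) (by positivity) (by positivity), ← rpow_natCast 2 (Finset.univ.sup a),
    ← rpow_natCast 2 (∑ k, a k), ← rpow_mul zero_le_two, neg_add, rpow_add two_pos,
    rpow_neg zero_le_two ((∑ k, a k : ℕ) : ℝ),
    show ((Finset.univ.sup a : ℕ) : ℝ) * -γ = -(γ * (Finset.univ.sup a : ℕ)) by ring]
  field_simp

/-- Bound for the part of the series supported on a dyadic box. -/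
theorem sum_dyadic_box_le {m : ℕ} {α : Fin m → ℝ} {L : Fin m → Fin m → ℝ}
    {c γ ε K Z : ℝ} (hc : 0 < c) (hγ : γ < 1) (hε : 0 < ε)
    (hεm : 2 * (ε * (m + 1)) = 1 - γ) (hK : 1 ≤ K) (hZ : 0 ≤ Z)
    (hform : ∀ n : Fin m → ℤ, n ≠ 0 → ∀ k, |∑ i, L k i * (n i : ℝ)| + 1 ≤ K * znorm n)
    (hsum : ∀ (S : Finset {n : Fin m → ℤ // n ≠ 0}) (f : {n : Fin m → ℤ // n ≠ 0} → ℝ)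
      (δ : ℝ), 0 < δ → (∀ x ∈ S, δ ≤ nint (f x)) →
      (∀ x ∈ S, ∀ y ∈ S, x ≠ y → δ ≤ nint (f x - f y)) →
      ∑ x ∈ S, (nint (f x))⁻¹ ≤ Z * δ ^ (-(1 + ε)))
    (a : Fin m → ℕ)
    (hlow : ∀ n : Fin m → ℤ, n ≠ 0 → (∀ k, |∑ i, L k i * (n i : ℝ)| + 1 ≤ 4 * 2 ^ a k) →
      c * 2 ^ (-((∑ k, a k : ℕ) + γ * (Finset.univ.sup a : ℕ)) : ℝ) ≤
        nint (∑ i, α i * (n i : ℝ)))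
    (S : Finset {n : Fin m → ℤ // n ≠ 0})
    (hS1 : ∀ n ∈ S, ∀ k, (2 : ℝ) ^ a k ≤ |∑ i, L k i * (n.1 i : ℝ)| + 1)
    (hS2 : ∀ n ∈ S, ∀ k, |∑ i, L k i * (n.1 i : ℝ)| + 1 < 2 ^ (a k + 1)) :
    ∑ n ∈ S, 1 / (znorm n.1 * (∏ k, (|∑ i, L k i * (n.1 i : ℝ)| + 1)) *
        nint (∑ i, α i * (n.1 i : ℝ))) ≤
      K * (Z * c ^ (-(1 + ε))) * ∏ k, ((2 : ℝ) ^ (-ε)) ^ a k := by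
  have hsj : ((∑ k, a k : ℕ) : ℝ) ≤ m * (Finset.univ.sup a : ℕ) := by
    have h := Finset.sum_le_card_nsmul Finset.univ a (Finset.univ.sup a)
      fun k _ => Finset.le_sup (Finset.mem_univ k)
    rw [Finset.card_univ, Fintype.card_fin, smul_eq_mul] at h
    exact_mod_cast h
  have hmax : ∀ n ∈ S, (2 : ℝ) ^ Finset.univ.sup a ≤ K * znorm n.1 := fun n hn =>
    two_pow_sup_le (one_le_mul_of_one_le_of_one_le hK (one_le_znorm n.2))
      fun k => (hS1 n hn k).trans (hform n.1 n.2 k)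
  have hprod : ∀ n ∈ S, (2 : ℝ) ^ (∑ k, a k) ≤ ∏ k, (|∑ i, L k i * (n.1 i : ℝ)| + 1) := by
    intro n hn
    rw [← Finset.prod_pow_eq_pow_sum]
    exact Finset.prod_le_prod (fun k _ => by positivity) fun k _ => hS1 n hn k
  rw [Finset.prod_pow_eq_pow_sum]
  generalize Finset.univ.sup a = j at *
  generalize ∑ k, a k = s at *
  have hδ : 0 < c * 2 ^ (-((s : ℝ) + γ * j)) := by positivity
  have hupper : ∀ n ∈ S, ∀ k, |∑ i, L k i * (n.1 i : ℝ)| + 1 < 2 * 2 ^ a k := fun n hn k => by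
    have := hS2 n hn k
    rwa [pow_succ, mul_comm] at this
  have hfar : ∀ n ∈ S, c * 2 ^ (-((s : ℝ) + γ * j)) ≤ nint (∑ i, α i * (n.1 i : ℝ)) :=
    fun n hn => hlow n.1 n.2 fun k => by
      have := hupper n hn k
      have : (0 : ℝ) < 2 ^ a k := by positivity
      linarith
  have hsep : ∀ x ∈ S, ∀ y ∈ S, x ≠ y → c * 2 ^ (-((s : ℝ) + γ * j)) ≤
      nint (∑ i, α i * (x.1 i : ℝ) - ∑ i, α i * (y.1 i : ℝ)) := by
    intro x hx y hy hxy
    have hlin : ∀ v : Fin m → ℝ, ∑ i, v i * ((x.1 - y.1) i : ℝ) =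
        ∑ i, v i * (x.1 i : ℝ) - ∑ i, v i * (y.1 i : ℝ) := fun v => by
      rw [← Finset.sum_sub_distrib]
      refine Finset.sum_congr rfl fun i _ => ?_
      rw [Pi.sub_apply, Int.cast_sub, mul_sub]
    rw [← hlin α]
    refine hlow (x.1 - y.1) (sub_ne_zero.2 fun h => hxy (Subtype.ext h)) fun k => ?_
    rw [hlin (L k)]
    have h1 := hupper x hx k
    have h2 := hupper y hy k
    have h3 := abs_sub (∑ i, L k i * (x.1 i : ℝ)) (∑ i, L k i * (y.1 i : ℝ))
    linarith
  have hinv := hsum S (fun n => ∑ i, α i * (n.1 i : ℝ)) _ hδ hfar hsep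
  have hterm : ∀ n ∈ S, 1 / (znorm n.1 * (∏ k, (|∑ i, L k i * (n.1 i : ℝ)| + 1)) *
      nint (∑ i, α i * (n.1 i : ℝ))) ≤
      K * 2 ^ (-((j : ℝ) + s)) * (nint (∑ i, α i * (n.1 i : ℝ)))⁻¹ := by
    intro n hn
    rw [one_div, mul_inv]
    refine mul_le_mul_of_nonneg_right ?_ (inv_nonneg.2 (nint_nonneg _))
    have hz : (2 : ℝ) ^ j / K ≤ znorm n.1 := by
      rw [div_le_iff₀ (by linarith), mul_comm]
      exact hmax n hn
    calc (znorm n.1 * ∏ k, (|∑ i, L k i * (n.1 i : ℝ)| + 1))⁻¹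
        ≤ ((2 : ℝ) ^ j / K * 2 ^ s)⁻¹ :=
          inv_anti₀ (by positivity) (mul_le_mul hz (hprod n hn) (by positivity) (znorm_nonneg _))
      _ = _ := by
          rw [rpow_neg zero_le_two, rpow_add two_pos, rpow_natCast, rpow_natCast]
          field_simp
  refine (Finset.sum_le_sum hterm).trans ?_
  rw [← Finset.mul_sum]
  calc _ ≤ K * 2 ^ (-((j : ℝ) + s)) * (Z * (c * 2 ^ (-((s : ℝ) + γ * j))) ^ (-(1 + ε))) :=
        mul_le_mul_of_nonneg_left hinv (by positivity)
    _ = K * (Z * c ^ (-(1 + ε))) * 2 ^ (-((j : ℝ) + s) + ((s : ℝ) + γ * j) * (1 + ε)) := by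
        rw [mul_rpow hc.le (by positivity), ← rpow_mul zero_le_two, rpow_add two_pos,
          neg_mul_neg]
        ring
    _ ≤ K * (Z * c ^ (-(1 + ε))) * 2 ^ (-ε * (s : ℝ)) := by
        refine mul_le_mul_of_nonneg_left (rpow_le_rpow_of_exponent_le one_le_two ?_)
          (by positivity)
        have hj0 : (0 : ℝ) ≤ j := by positivity
        have h1 := mul_le_mul_of_nonneg_left hsj hε.le
        have h2 : 0 ≤ (1 - γ) * (ε * j) := mul_nonneg (by linarith) (by positivity)
        have h3 : (1 - γ) * j = 2 * (ε * (m + 1)) * j := by rw [hεm]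
        nlinarith [mul_nonneg hε.le hj0]
    _ = _ := by rw [rpow_mul zero_le_two, rpow_natCast]

/-- The summability statement for a nonnegative exponent. -/
theorem summable_of_diophantine_bound_of_nonneg {m : ℕ} (α : Fin m → ℝ)
    (L : Fin m → Fin m → ℝ) (hL : LinearIndependent ℝ L)
    (C γ : ℝ) (hC : 0 < C) (hγ0 : 0 ≤ γ) (hγ : γ < 1)
    (hbound : ∀ n : Fin m → ℤ, n ≠ 0 → C * znorm n ^ (-γ) ≤
        nint (∑ i, α i * (n i : ℝ)) * ∏ k, (|∑ i, L k i * (n i : ℝ)| + 1)) :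
    Summable (fun n : {n : Fin m → ℤ // n ≠ 0} =>
      1 / (znorm n.1 * (∏ k, (|∑ i, L k i * (n.1 i : ℝ)| + 1)) *
        nint (∑ i, α i * (n.1 i : ℝ)))) := by
  obtain ⟨K, hK, hnorm⟩ := exists_znorm_le_of_abs_form_le hL
  obtain ⟨K₁, hK₁, hform⟩ := exists_abs_form_add_one_le L
  obtain ⟨ε, hε, hεm⟩ : ∃ ε : ℝ, 0 < ε ∧ 2 * (ε * (m + 1)) = 1 - γ :=
    ⟨(1 - γ) / (2 * (m + 1)), div_pos (by linarith) (by positivity), by field_simp⟩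
  obtain ⟨Z, hZ, hsum⟩ := exists_sum_inv_nint_le hε
  have hc : 0 < C * (4 * K) ^ (-γ) / 4 ^ m := by positivity
  have hdyadic : ∀ (n : {n : Fin m → ℤ // n ≠ 0}) (k : Fin m), ∃ j : ℕ,
      (2 : ℝ) ^ j ≤ |∑ i, L k i * (n.1 i : ℝ)| + 1 ∧
      |∑ i, L k i * (n.1 i : ℝ)| + 1 < 2 ^ (j + 1) := fun n k =>
    exists_nat_pow_near (by linarith [abs_nonneg (∑ i, L k i * (n.1 i : ℝ))]) one_lt_two
  choose φ hφ1 hφ2 using hdyadic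
  have hr1 : (2 : ℝ) ^ (-ε) < 1 := rpow_lt_one_of_one_lt_of_neg one_lt_two (by linarith)
  refine summable_of_sum_fiber_le φ (fun n => ?_)
    ((summable_pi_prod_geometric (by positivity) hr1).mul_left
      (K₁ * (Z * (C * (4 * K) ^ (-γ) / 4 ^ m) ^ (-(1 + ε)))))
    (fun a => by positivity) fun a S hS => ?_
  · have := znorm_nonneg n.1
    have := nint_nonneg (∑ i, α i * (n.1 i : ℝ))
    positivity
  · exact sum_dyadic_box_le hc hγ hε hεm hK₁ hZ hform hsum a
      (le_nint_of_abs_form_le hC hγ0 hK hbound hnorm a) S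
      (fun n hn k => hS n hn ▸ hφ1 n k) (fun n hn k => hS n hn ▸ hφ2 n k)

/-- If `‖α₁n₁+⋯+α_{d-1}n_{d-1}‖ · ∏ (|L_k(n)|+1) ≥ C|n|^{-γ}` for all `n ≠ 0`, with
`C > 0` and `γ < 1`, then the series
`∑_{n ≠ 0} 1/(|n| · ∏ (|L_k(n)|+1) · ‖α₁n₁+⋯+α_{d-1}n_{d-1}‖)` converges. -/
theorem series_convergence_of_diophantine_bound
    {d : ℕ} (hd : 2 ≤ d) (α : Fin (d - 1) → ℝ)
    (L : Fin (d - 1) → Fin (d - 1) → ℝ) (hLind : LinearIndependent ℝ L)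
    (C γ : ℝ) (hC : 0 < C) (hγ : γ < 1)
    (hbound : ∀ n : Fin (d - 1) → ℤ, n ≠ 0 →
      C * znorm n ^ (-γ) ≤
        nint (∑ i, α i * (n i : ℝ)) * ∏ k, (|∑ i, L k i * (n i : ℝ)| + 1)) :
    Summable (fun n : {n : Fin (d - 1) → ℤ // n ≠ 0} =>
      1 / (znorm n.1 * (∏ k, (|∑ i, L k i * (n.1 i : ℝ)| + 1)) *
        nint (∑ i, α i * (n.1 i : ℝ)))) := by
  refine summable_of_diophantine_bound_of_nonneg α L hLind C (max γ 0) hC (le_max_right _ _)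
    (max_lt hγ one_pos) fun n hn => le_trans ?_ (hbound n hn)
  exact mul_le_mul_of_nonneg_left (rpow_le_rpow_of_exponent_le (one_le_znorm hn)
    (neg_le_neg (le_max_left _ _))) hC.le
end

section
/- Let d ≥ 2, let α ∈ ℝ^d with α_d = 1, and let P ⊆ [0,1]^d be a polytope with nonempty interior such that every facet of P has a normal vector ν with ⟨ν, α⟩ ≠ 0 (i.e., no facet of P is parallel to α). Then the function f : ℝ^{d−1} → ℝ defined by f(x_1, …, x_{d−1}) = ∫_0^1 χ_P({x_1 + tα_1}, …, {x_{d−1} + tα_{d−1}}, t) dt is continuous, and it is periodic modulo ℤ^{d−1}. -/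
open MeasureTheory Real

/-- The convex hull of finitely many points. -/
def IsPolytope {d : ℕ} (P : Set (Fin d → ℝ)) : Prop :=
  ∃ V : Finset (Fin d → ℝ), P = convexHull ℝ (V : Set (Fin d → ℝ))

/-- A facet of a polytope `P ⊆ ℝ^d`: a `(d-1)`-dimensional face of `P`. -/
def IsFacet {d : ℕ} (P F : Set (Fin d → ℝ)) : Prop :=
  IsExtreme ℝ P F ∧ Module.finrank ℝ (affineSpan ℝ F).direction = d - 1

/-- A normal vector of a facet: a nonzero vector orthogonal to the facet. -/
def IsNormalVec {d : ℕ} (F : Set (Fin d → ℝ)) (ν : Fin d → ℝ) : Prop :=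
  ν ≠ 0 ∧ ∀ x ∈ F, ∀ y ∈ F, (∑ i, ν i * (x i - y i)) = 0

/-- `f(x₁,…,x_{d-1}) = ∫_0^1 χ_P({x₁+tα₁},…,{x_{d-1}+tα_{d-1}}, t) dt`. -/
noncomputable def fFun {d : ℕ} (α : Fin d → ℝ) (P : Set (Fin d → ℝ))
    (x : Fin (d - 1) → ℝ) : ℝ :=
  ∫ t in (0:ℝ)..1, Set.indicator P (fun _ => (1:ℝ))
    (fun j : Fin d => if h : (j : ℕ) < d - 1 then Int.fract (x ⟨j, h⟩ + t * α j) else t)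

/-- Every boundary point of a full-dimensional polytope lies in a facet cut out by a supporting
functional. -/
theorem exists_facet_functional {E : Type*} [NormedAddCommGroup E] [NormedSpace ℝ E]
    [FiniteDimensional ℝ E] (V : Finset E)
    (hint : (interior (convexHull ℝ (V : Set E))).Nonempty) {p : E}
    (hp : p ∈ convexHull ℝ (V : Set E)) (hp' : p ∉ interior (convexHull ℝ (V : Set E))) :
    ∃ l : Module.Dual ℝ E, l ≠ 0 ∧ (∀ x ∈ convexHull ℝ (V : Set E), l x ≤ l p) ∧
      Module.finrank ℝ (vectorSpan ℝ {x ∈ convexHull ℝ (V : Set E) | l x = l p}) =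
        Module.finrank ℝ E - 1 := by
  classical
  set P := convexHull ℝ (V : Set E) with hP
  have hconv : Convex ℝ P := convex_convexHull ℝ _
  have hnonconst : ∀ m : Module.Dual ℝ E, m ≠ 0 → ∃ v ∈ V, m (v - p) ≠ 0 := by
    intro m hm
    by_contra! h
    apply hm
    have hPm : P ⊆ {x | m x = m p} := by
      refine convexHull_min (fun v hv => ?_) (convex_hyperplane m.isLinear _)
      have := h v hv
      rw [map_sub] at this
      exact sub_eq_zero.1 this
    obtain ⟨c, hc⟩ := hint
    have hmc : m c = m p := hPm (interior_subset hc)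
    ext w
    have hnear : ∀ᶠ s : ℝ in nhds 0, c + s • w ∈ interior P := by
      have hcont : Continuous fun s : ℝ => c + s • w := by fun_prop
      exact hcont.continuousAt.eventually_mem (isOpen_interior.mem_nhds (by simpa using hc))
    obtain ⟨s, hs, hs0⟩ := (hnear.filter_mono nhdsWithin_le_nhds |>.and
      (self_mem_nhdsWithin : {(0 : ℝ)}ᶜ ∈ nhdsWithin (0 : ℝ) {0}ᶜ)).exists
    have hms : m (c + s • w) = m p := hPm (interior_subset hs)
    rw [map_add, map_smul, hmc, smul_eq_mul] at hms
    have hsw : s * m w = 0 := by linarith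
    simpa using (mul_eq_zero.1 hsw).resolve_left hs0
  let good : Module.Dual ℝ E → Prop := fun l => l ≠ 0 ∧ ∀ x ∈ P, l x ≤ l p
  let dim : Module.Dual ℝ E → ℕ := fun l => Module.finrank ℝ (vectorSpan ℝ {x ∈ P | l x = l p})
  have hgood : ∃ l, good l := by
    obtain ⟨f, hf⟩ := geometric_hahn_banach_open_point hconv.interior isOpen_interior hp'
    refine ⟨f.toLinearMap, ?_, fun x hx => ?_⟩
    · intro h0
      obtain ⟨c, hc⟩ := hint
      have := hf c hc
      have h1 : ∀ x, f x = 0 := fun x => by simpa using LinearMap.congr_fun h0 x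
      simp [h1] at this
    · have hx' : x ∈ closure (interior P) := by
        rw [hconv.closure_interior_eq_closure_of_nonempty_interior hint]
        exact subset_closure hx
      exact closure_minimal (t := {x | f x ≤ f p}) (fun y hy => (hf y hy).le)
        (isClosed_le f.continuous continuous_const) hx'
  obtain ⟨l, ⟨hl0, hlP⟩, hmax⟩ : ∃ l, good l ∧ ∀ l', good l' → dim l' ≤ dim l := by
    have hbdd : BddAbove (dim '' {l | good l}) :=
      ⟨Module.finrank ℝ E, by rintro _ ⟨l, -, rfl⟩; exact Submodule.finrank_le _⟩
    have hne : (dim '' {l | good l}).Nonempty := by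
      obtain ⟨l, hl⟩ := hgood
      exact ⟨_, l, hl, rfl⟩
    obtain ⟨l, hl, hle⟩ := Nat.sSup_mem hne hbdd
    exact ⟨l, hl, fun l' hl' => hle ▸ le_csSup hbdd ⟨l', hl', rfl⟩⟩
  refine ⟨l, hl0, hlP, ?_⟩
  set W := vectorSpan ℝ {x ∈ P | l x = l p} with hW
  have hWker : W ≤ LinearMap.ker l := by
    rw [hW, vectorSpan_def, Submodule.span_le]
    rintro _ ⟨x, hx, y, hy, rfl⟩
    simp [hx.2, hy.2]
  have hker : Module.finrank ℝ (LinearMap.ker l) + 1 = Module.finrank ℝ E :=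
    Module.Dual.finrank_ker_add_one_of_ne_zero hl0
  have hle := Submodule.finrank_mono hWker
  by_contra hne
  have hlt : Module.finrank ℝ W + 1 < Module.finrank ℝ E := by omega
  obtain ⟨m, hmW, hml⟩ : ∃ m ∈ W.dualAnnihilator, m ∉ Submodule.span ℝ {l} := by
    by_contra! h
    have h1 := Submodule.finrank_mono (show W.dualAnnihilator ≤ Submodule.span ℝ {l} from h)
    have h2 := finrank_span_singleton (K := ℝ) hl0
    have h3 := Subspace.finrank_add_finrank_dualAnnihilator_eq W
    omega
  have hm0 : m ≠ 0 := fun h => hml (h ▸ Submodule.zero_mem _)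
  obtain ⟨n, hnW, hnl, v₁, hv₁, hnv₁⟩ : ∃ n ∈ W.dualAnnihilator,
      n ∉ Submodule.span ℝ {l} ∧ ∃ v ∈ V, n (v - p) < 0 := by
    obtain ⟨v, hv, hmv⟩ := hnonconst m hm0
    rcases lt_or_gt_of_ne hmv with h | h
    · exact ⟨m, hmW, hml, v, hv, h⟩
    · exact ⟨-m, Submodule.neg_mem _ hmW, fun h' => hml (by simpa using Submodule.neg_mem _ h'),
        v, hv, by simpa using h⟩
  have hnW' : ∀ x ∈ W, n x = 0 := (Submodule.mem_dualAnnihilator n).1 hnW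
  have hVP : ∀ v ∈ V, v ∈ P := fun v hv => subset_convexHull ℝ _ hv
  have hmemW : ∀ x ∈ P, l x = l p → x - p ∈ W := fun x hx hxl =>
    vsub_mem_vectorSpan ℝ (s := {x ∈ P | l x = l p}) ⟨hx, hxl⟩ ⟨hp, rfl⟩
  obtain ⟨v₀, hv₀, hmin⟩ := (V.filter fun v => n (v - p) < 0).exists_min_image
    (fun v => l (v - p) / n (v - p)) ⟨v₁, by simp [hv₁, -map_sub, hnv₁]⟩
  obtain ⟨hv₀V, hnv₀⟩ := Finset.mem_filter.1 hv₀
  set s := l (v₀ - p) / n (v₀ - p) with hs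
  have hs0 : 0 ≤ s := div_nonneg_of_nonpos
    (by rw [map_sub]; exact sub_nonpos.2 (hlP v₀ (hVP v₀ hv₀V))) hnv₀.le
  have hsv₀ : (l - s • n) (v₀ - p) = 0 := by
    have : s * n (v₀ - p) = l (v₀ - p) := div_mul_cancel₀ _ hnv₀.ne
    rw [LinearMap.sub_apply, LinearMap.smul_apply, smul_eq_mul, this, sub_self]
  have hv₀W : v₀ - p ∉ W := fun h => hnv₀.ne (hnW' _ h)
  have hl' : good (l - s • n) := by
    constructor
    · intro h0
      have hln : l = s • n := sub_eq_zero.1 h0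
      have hs1 : s ≠ 0 := by
        rintro h; rw [h, zero_smul] at hln; exact hl0 hln
      apply hnl
      rw [Submodule.mem_span_singleton]
      exact ⟨s⁻¹, by rw [hln, smul_smul, inv_mul_cancel₀ hs1, one_smul]⟩
    · refine fun x hx => convexHull_min (t := {x | (l - s • n) x ≤ (l - s • n) p})
        (fun v hv => ?_) (convex_halfSpace_le (l - s • n).isLinear _) hx
      have h1 : l (v - p) ≤ 0 := by rw [map_sub]; exact sub_nonpos.2 (hlP v (hVP v hv))
      suffices h : (l - s • n) (v - p) ≤ 0 by
        rw [map_sub] at h; exact sub_nonpos.1 h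
      rw [LinearMap.sub_apply, LinearMap.smul_apply, smul_eq_mul]
      rcases lt_or_ge (n (v - p)) 0 with h2 | h2
      · have := hmin v (Finset.mem_filter.2 ⟨hv, h2⟩)
        have := (le_div_iff_of_neg h2).1 this
        linarith
      · have := mul_nonneg hs0 h2
        linarith
  have hlt' : W < vectorSpan ℝ {x ∈ P | (l - s • n) x = (l - s • n) p} := by
    refine lt_of_le_of_ne (vectorSpan_mono ℝ fun x hx => ⟨hx.1, ?_⟩) fun h => hv₀W ?_
    · have h1 := hnW' _ (hmemW x hx.1 hx.2)
      rw [map_sub, sub_eq_zero] at h1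
      simp [h1, hx.2]
    · rw [h]
      rw [map_sub, sub_eq_zero] at hsv₀
      exact vsub_mem_vectorSpan ℝ (s := {x ∈ P | (l - s • n) x = (l - s • n) p})
        ⟨hVP v₀ hv₀V, hsv₀⟩ ⟨hp, rfl⟩
  exact absurd (hmax _ hl') (not_le.2 (Submodule.finrank_lt_finrank_of_lt hlt'))

/-- A line parallel to no facet of a full-dimensional polytope meets its boundary in a null set. -/
theorem volume_line_inter_frontier_eq_zero {d : ℕ} (α : Fin d → ℝ) (P : Set (Fin d → ℝ))
    (hpoly : IsPolytope P) (hint : (interior P).Nonempty)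
    (hfac : ∀ F : Set (Fin d → ℝ), Convex ℝ F → IsFacet P F →
      ∃ ν : Fin d → ℝ, IsNormalVec F ν ∧ (∑ i, ν i * α i) ≠ 0) (y : Fin d → ℝ) :
    volume {t : ℝ | y + t • α ∈ frontier P} = 0 := by
  obtain ⟨V, rfl⟩ := hpoly
  set P := convexHull ℝ (V : Set (Fin d → ℝ)) with hP
  have hconv : Convex ℝ P := convex_convexHull ℝ _
  have hclosed : IsClosed P := V.finite_toSet.isClosed_convexHull ℝ
  set T : Set ℝ := {t | y + t • α ∈ P} with hT
  have hTconv : Convex ℝ T := by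
    intro a ha b hb u v hu hv huv
    have := hconv ha hb hu hv huv
    have h : y + (u • a + v • b) • α = u • (y + a • α) + v • (y + b • α) := by
      obtain rfl : v = 1 - u := by linarith
      module
    rw [hT, Set.mem_ofPred_eq, h]
    exact this
  refine measure_mono_null (fun t ht => ?_) (hTconv.addHaar_frontier volume)
  rw [Set.mem_ofPred_eq, hclosed.frontier_eq] at ht
  refine ⟨subset_closure ht.1, fun htint => ?_⟩
  obtain ⟨l, -, hlP, hdim⟩ := exists_facet_functional V hint ht.1 ht.2
  set p := y + t • α with hp
  obtain ⟨ε, hε, hball⟩ := Metric.mem_nhds_iff.1 (mem_interior_iff_mem_nhds.1 htint)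
  have hmem : ∀ s : ℝ, |s| < ε → p + s • α ∈ P := by
    intro s hs
    have : t + s ∈ T := hball (by simpa [Real.dist_eq] using hs)
    rw [hT, Set.mem_ofPred_eq, add_smul, ← add_assoc] at this
    exact this
  have hplus := hmem (ε / 2) (by rw [abs_of_pos (by positivity)]; linarith)
  have hminus := hmem (-(ε / 2)) (by rw [abs_neg, abs_of_pos (by positivity)]; linarith)
  have hlα : l α = 0 := by
    have h1 := hlP _ hplus
    have h2 := hlP _ hminus
    simp only [map_add, map_smul, smul_eq_mul] at h1 h2
    nlinarith
  set F := {x ∈ P | l x = l p} with hF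
  have hFconv : Convex ℝ F := hconv.inter (convex_hyperplane l.isLinear _)
  have hFext : IsExtreme ℝ P F := by
    refine IsExposed.isExtreme fun _ => ⟨l.toContinuousLinearMap, ?_⟩
    ext x
    refine and_congr_right fun hx => ⟨fun h z hz => ?_, fun h => ?_⟩
    · simpa [h] using hlP z hz
    · exact le_antisymm (hlP x hx) (by simpa using h p ht.1)
  obtain ⟨ν, ⟨-, hν⟩, hνα⟩ := hfac F hFconv
    ⟨hFext, by rw [direction_affineSpan, hdim, Module.finrank_fin_fun]⟩
  have h := hν _ ⟨hplus, by simp [hlα]⟩ _ ⟨hminus, by simp [hlα]⟩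
  apply hνα
  have h' : (∑ i, ν i * ((p + (ε / 2) • α) i - (p + (-(ε / 2)) • α) i)) =
      ε * ∑ i, ν i * α i := by
    rw [Finset.mul_sum]
    refine Finset.sum_congr rfl fun i _ => ?_
    simp only [Pi.add_apply, Pi.smul_apply, smul_eq_mul]
    ring
  rw [h'] at h
  exact (mul_eq_zero.1 h).resolve_left hε.ne'

/-- The point `(x + tα', t) - (k, 0)`, where `α'` consists of the first `d - 1` coordinates of
`α`. -/
def shiftedPoint {d : ℕ} (α : Fin d → ℝ) (t : ℝ) (k : Fin (d - 1) → ℤ) (x : Fin (d - 1) → ℝ) :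
    Fin d → ℝ :=
  fun j => if h : (j : ℕ) < d - 1 then x ⟨j, h⟩ + t * α j - k ⟨j, h⟩ else t

theorem continuous_shiftedPoint {d : ℕ} (α : Fin d → ℝ) (t : ℝ) (k : Fin (d - 1) → ℤ) :
    Continuous (shiftedPoint α t k) := by
  refine continuous_pi fun j => ?_
  unfold shiftedPoint
  split_ifs <;> fun_prop

theorem shiftedPoint_floor {d : ℕ} (α : Fin d → ℝ) (t : ℝ) (x : Fin (d - 1) → ℝ) :
    shiftedPoint α t (fun i => ⌊x i + t * α ⟨i, by omega⟩⌋) x =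
      fun j : Fin d => if h : (j : ℕ) < d - 1 then Int.fract (x ⟨j, h⟩ + t * α j) else t :=
  rfl

theorem shiftedPoint_eq_add_smul {d : ℕ} (α : Fin d → ℝ)
    (hαd : ∀ j : Fin d, ¬(j : ℕ) < d - 1 → α j = 1) (t : ℝ) (k : Fin (d - 1) → ℤ) (x : Fin (d - 1) → ℝ) :
    shiftedPoint α t k x = shiftedPoint α 0 k x + t • α := by
  ext j
  simp only [shiftedPoint, Pi.add_apply, Pi.smul_apply, smul_eq_mul]
  split_ifs with h
  · ring
  · rw [hαd j h]
    ring

/-- A shifted point in the interior of the unit cube is shifted by the integer parts. -/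
theorem shiftedPoint_eq_fract {d : ℕ} {α : Fin d → ℝ} {t : ℝ} {k : Fin (d - 1) → ℤ}
    {x : Fin (d - 1) → ℝ} (h : shiftedPoint α t k x ∈ interior (Set.Icc (0 : Fin d → ℝ) 1)) :
    shiftedPoint α t k x =
      fun j : Fin d => if h : (j : ℕ) < d - 1 then Int.fract (x ⟨j, h⟩ + t * α j) else t := by
  rw [← Set.pi_univ_Icc, interior_pi_set Set.finite_univ] at h
  ext j
  have hj := h j (Set.mem_univ j)
  simp only [interior_Icc, Pi.zero_apply, Pi.one_apply, shiftedPoint] at hj ⊢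
  split_ifs with hlt
  · rw [dif_pos hlt] at hj
    exact (Int.fract_eq_iff.2 ⟨hj.1.le, hj.2, k ⟨j, hlt⟩, by ring⟩).symm
  · rfl

theorem continuousAt_indicator_fract {d : ℕ} (α : Fin d → ℝ) (P : Set (Fin d → ℝ))
    (hclosed : IsClosed P) (hsub : P ⊆ Set.Icc 0 1) (t : ℝ) (x₀ : Fin (d - 1) → ℝ)
    (hx₀ : ∀ k, shiftedPoint α t k x₀ ∉ frontier P) :
    ContinuousAt (fun x : Fin (d - 1) → ℝ => Set.indicator P (fun _ => (1 : ℝ))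
      (fun j : Fin d => if h : (j : ℕ) < d - 1 then Int.fract (x ⟨j, h⟩ + t * α j) else t))
      x₀ := by
  have hinterior : ∀ k, shiftedPoint α t k x₀ ∈ P → shiftedPoint α t k x₀ ∈ interior P := by
    intro k hk
    by_contra h
    exact hx₀ k (hclosed.frontier_eq ▸ ⟨hk, h⟩)
  by_cases hk : ∃ k, shiftedPoint α t k x₀ ∈ P
  · obtain ⟨k, hk⟩ := hk
    refine (continuousAt_const (y := (1 : ℝ))).congr ?_
    filter_upwards [(continuous_shiftedPoint α t k).continuousAt.eventually_mem
      (isOpen_interior.mem_nhds (hinterior k hk))] with x hx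
    rw [← shiftedPoint_eq_fract (interior_mono hsub hx),
      Set.indicator_of_mem (interior_subset hx)]
  · push Not at hk
    refine (continuousAt_const (y := (0 : ℝ))).congr ?_
    let κ : Fin (d - 1) → ℤ := fun i => ⌊x₀ i + t * α ⟨i, by omega⟩⌋
    have hbox : ∀ᶠ x in nhds x₀, ∀ k ∈ Set.Icc (κ - 1) (κ + 1), shiftedPoint α t k x ∉ P :=
      (Set.finite_Icc _ _).eventually_all.2 fun k _ =>
        (continuous_shiftedPoint α t k).continuousAt.eventually_mem
          (hclosed.isOpen_compl.mem_nhds (hk k))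
    filter_upwards [hbox, Metric.ball_mem_nhds x₀ one_pos] with x hx hdist
    rw [← shiftedPoint_floor, Set.indicator_of_notMem (hx _ ?_)]
    have hi : ∀ i, |x i - x₀ i| < 1 := fun i =>
      (Real.dist_eq (x i) (x₀ i) ▸ dist_le_pi_dist x x₀ i).trans_lt hdist
    constructor <;> intro i
    · have := abs_lt.1 (hi i)
      have h1 := Int.floor_le (x₀ i + t * α ⟨i, by omega⟩)
      simp only [κ, Pi.sub_apply, Pi.one_apply]
      rw [Int.le_floor]
      push_cast
      linarith
    · have := abs_lt.1 (hi i)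
      have h1 := Int.lt_floor_add_one (x₀ i + t * α ⟨i, by omega⟩)
      simp only [κ, Pi.add_apply, Pi.one_apply]
      rw [← Int.lt_add_one_iff, Int.floor_lt]
      push_cast
      linarith

/-- Continuity of `fFun` when no convex facet of `P` is parallel to `α`. -/
theorem continuous_fFun {d : ℕ} (α : Fin d → ℝ)
    (hαd : ∀ j : Fin d, ¬(j : ℕ) < d - 1 → α j = 1) (P : Set (Fin d → ℝ)) (hpoly : IsPolytope P)
    (hsub : P ⊆ Set.Icc 0 1) (hint : (interior P).Nonempty)
    (hfac : ∀ F : Set (Fin d → ℝ), Convex ℝ F → IsFacet P F →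
      ∃ ν : Fin d → ℝ, IsNormalVec F ν ∧ (∑ i, ν i * α i) ≠ 0) :
    Continuous (fFun α P) := by
  have hclosed : IsClosed P := by
    obtain ⟨V, rfl⟩ := hpoly
    exact V.finite_toSet.isClosed_convexHull ℝ
  refine continuous_iff_continuousAt.2 fun x₀ => ?_
  refine intervalIntegral.continuousAt_of_dominated_interval (bound := fun _ => 1)
    (Filter.Eventually.of_forall fun x => ?_) (Filter.Eventually.of_forall fun x => ?_)
    intervalIntegrable_const ?_
  · refine Measurable.aestronglyMeasurable ?_
    refine (measurable_const.indicator hclosed.measurableSet).comp (measurable_pi_lambda _ ?_)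
    intro j
    split_ifs <;> fun_prop
  · refine Filter.Eventually.of_forall fun t _ => ?_
    exact (norm_indicator_le_norm_self _ _).trans (by simp)
  · have hae : ∀ᵐ t : ℝ, ∀ k, shiftedPoint α t k x₀ ∉ frontier P := by
      refine ae_all_iff.2 fun k => ?_
      have := volume_line_inter_frontier_eq_zero α P hpoly hint hfac (shiftedPoint α 0 k x₀)
      filter_upwards [compl_mem_ae_iff.2 this] with t ht
      rw [shiftedPoint_eq_add_smul α hαd]
      exact ht
    filter_upwards [hae] with t ht _
    exact continuousAt_indicator_fract α P hclosed hsub t x₀ ht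

/-- If no facet of the polytope `P` is parallel to the direction `α` (with `α_d = 1`), then
the function `f` is continuous and periodic modulo `ℤ^{d-1}`. -/
theorem fFun_continuous_and_periodic
    {d : ℕ} (hd : 2 ≤ d) (α : Fin d → ℝ) (hαd : α ⟨d - 1, by omega⟩ = 1)
    (P : Set (Fin d → ℝ)) (hpoly : IsPolytope P) (hsub : P ⊆ Set.Icc 0 1)
    (hint : (interior P).Nonempty)
    (hfac : ∀ F : Set (Fin d → ℝ), IsFacet P F →
      ∃ ν : Fin d → ℝ, IsNormalVec F ν ∧ (∑ i, ν i * α i) ≠ 0) :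
    Continuous (fFun α P) ∧
      ∀ (x : Fin (d - 1) → ℝ) (m : Fin (d - 1) → ℤ),
        fFun α P (x + fun i => (m i : ℝ)) = fFun α P x := by
  have hlast : ∀ j : Fin d, ¬(j : ℕ) < d - 1 → α j = 1 := by
    intro j hj
    rw [← hαd]
    exact congrArg α (Fin.ext (by simp only; omega))
  refine ⟨continuous_fFun α hlast P hpoly hsub hint fun F _ => hfac F, fun x m => ?_⟩
  unfold fFun
  simp only [Pi.add_apply, add_right_comm, Int.fract_add_intCast]
end

section
/- Let m ≥ 1, let f : ℝ^m → ℝ be continuous and periodic modulo ℤ^m, and suppose its Fourier coefficients f̂(n) = ∫_{[0,1]^m} f(x) e^{−2πi⟨n,x⟩} dx satisfy Σ_{n ∈ ℤ^m} |f̂(n)| < ∞. Then for every s ∈ ℝ^m, every α ∈ ℝ^m, and every positive integer T, | Σ_{k=0}^{T−1} ( f(s + kα) − f̂(0) ) | ≤ Σ_{n ∈ ℤ^m, n ≠ 0} |f̂(n)| / (2 ‖⟨n, α⟩‖). -/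
open MeasureTheory Real

lemma two_mul_nint_le_abs_sin (x : ℝ) : 2 * nint x ≤ |sin (π * x)| := by
  have hsin : |sin (π * (x - round x))| = |sin (π * x)| := by
    rw [mul_sub, mul_comm π (round x : ℝ), sin_sub_int_mul_pi, abs_mul, abs_zpow]
    simp
  rw [nint, ← hsin, abs_sin_eq_sin_abs_of_abs_le_pi, abs_mul, abs_of_pos pi_pos]
  · have h := abs_sub_round x
    have := mul_le_sin (x := π * |x - round x|) (by positivity) (by nlinarith [pi_pos])
    rwa [← mul_assoc, div_mul_cancel₀ _ pi_ne_zero] at this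
  · rw [abs_mul, abs_of_pos pi_pos]
    nlinarith [pi_pos, abs_sub_round x]

/-- The geometric sum `∑_{k<T} e(kx)` is at most `1 / (2‖x‖)`. -/
lemma norm_sum_exp_le {x : ℝ} (hx : 0 < nint x) (T : ℕ) :
    ‖∑ k ∈ Finset.range T, Complex.exp (Complex.I * ((2 * π * x : ℝ) : ℂ)) ^ k‖ ≤
      1 / (2 * nint x) := by
  set z := Complex.exp (Complex.I * ((2 * π * x : ℝ) : ℂ)) with hz
  have hz1 : ‖z‖ = 1 := by rw [hz, mul_comm, Complex.norm_exp_ofReal_mul_I]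
  have hlow : 2 * (2 * nint x) ≤ ‖z - 1‖ := by
    rw [hz, Complex.norm_exp_I_mul_ofReal_sub_one, norm_mul, norm_eq_abs, norm_eq_abs,
      show 2 * π * x / 2 = π * x by ring, abs_two]
    gcongr
    exact two_mul_nint_le_abs_sin x
  have hne : z ≠ 1 := by
    intro h
    rw [h, sub_self, norm_zero] at hlow
    linarith
  have hup : ‖z ^ T - 1‖ ≤ 2 := by
    refine (norm_sub_le _ _).trans ?_
    rw [norm_pow, hz1, one_pow, norm_one]
    norm_num
  rw [geom_sum_eq hne, norm_div]
  calc ‖z ^ T - 1‖ / ‖z - 1‖ ≤ 2 / (2 * (2 * nint x)) := by gcongr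
    _ = 1 / (2 * nint x) := by field_simp

lemma mFourier_coe {d : Type*} [Fintype d] (n : d → ℤ) (x : d → ℝ) :
    UnitAddTorus.mFourier n (fun i => (x i : UnitAddCircle)) =
      Complex.exp (Complex.I * ((2 * π * ∑ i, (n i : ℝ) * x i : ℝ) : ℂ)) := by
  simp only [UnitAddTorus.mFourier, ContinuousMap.coe_mk, fourier_coe_apply, ← Complex.exp_sum]
  push_cast
  rw [Finset.mul_sum, Finset.mul_sum]
  congr 1
  refine Finset.sum_congr rfl fun i _ => ?_
  ring

lemma exists_continuousMap_unitAddTorus {d E : Type*} [TopologicalSpace E] {f : (d → ℝ) → E}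
    (hf : Continuous f)
    (hper : ∀ (x : d → ℝ) (v : d → ℤ), f (x + fun i => (v i : ℝ)) = f x) :
    ∃ F : C(UnitAddTorus d, E), ∀ x : d → ℝ, F (fun i => (x i : UnitAddCircle)) = f x := by
  have hq : IsOpenQuotientMap (Pi.map fun (_ : d) (t : ℝ) => (t : UnitAddCircle)) :=
    .piMap fun _ => QuotientAddGroup.isOpenQuotientMap_mk
  have hlift : ∀ x y : d → ℝ, (∀ i, (x i : UnitAddCircle) = y i) → f x = f y := by
    intro x y h
    have hv : ∀ i, ∃ v : ℤ, (v : ℝ) = x i - y i := fun i => by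
      simpa using AddCircle.coe_eq_zero_iff (1 : ℝ) (x := x i - y i) |>.mp
        (by rw [AddCircle.coe_sub, h i, sub_self])
    choose v hv using hv
    rw [← hper y v]
    congr 1 with i
    simp [hv]
  obtain ⟨g, hg⟩ := hq.surjective.hasRightInverse
  have hcomp : ∀ x : d → ℝ, f (g fun i => (x i : UnitAddCircle)) = f x := fun x =>
    hlift _ _ fun i => congrFun (hg fun i => (x i : UnitAddCircle)) i
  refine ⟨⟨fun t => f (g t), ?_⟩, hcomp⟩
  rw [← hq.continuous_comp_iff]
  exact hf.congr fun x => (hcomp x).symm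

/-- A continuous `ℤ^d`-periodic function with summable Fourier coefficients is the sum of its
Fourier series. -/
lemma hasSum_fourier_of_periodic {d : Type*} [Fintype d] {f : (d → ℝ) → ℂ} (hf : Continuous f)
    (hper : ∀ (x : d → ℝ) (v : d → ℤ), f (x + fun i => (v i : ℝ)) = f x) {c : (d → ℤ) → ℂ}
    (hc : ∀ n, c n = ∫ x in Set.Icc (0 : d → ℝ) 1,
      f x * Complex.exp (-(2 * π * (∑ i, (n i : ℝ) * x i) : ℝ) * Complex.I))
    (hsum : Summable c) (x : d → ℝ) :
    HasSum (fun n => c n * Complex.exp (Complex.I * ((2 * π * ∑ i, (n i : ℝ) * x i : ℝ) : ℂ)))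
      (f x) := by
  obtain ⟨F, hF⟩ := exists_continuousMap_unitAddTorus hf hper
  have hcoeff : UnitAddTorus.mFourierCoeff F = c := by
    ext n
    have hset : {x : d → ℝ | ∀ i, x i ∈ Set.Ioc ((0 : d → ℝ) i) ((0 : d → ℝ) i + 1)} =
        Set.pi Set.univ fun i => Set.Ioc ((0 : d → ℝ) i) ((1 : d → ℝ) i) := by
      ext x
      simp
    rw [UnitAddTorus.mFourierCoeff_eq_integral F n 0, hc, hset, volume_pi,
      Measure.restrict_congr_set Measure.univ_pi_Ioc_ae_eq_Icc]
    congr 1 with x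
    rw [hF, mFourier_coe, smul_eq_mul, mul_comm]
    congr 2
    push_cast [Pi.neg_apply]
    simp only [neg_mul, Finset.sum_neg_distrib]
    ring
  have h := UnitAddTorus.hasSum_mFourier_series_apply_of_summable (f := F) (by rwa [hcoeff])
    fun i => (x i : UnitAddCircle)
  simpa only [hcoeff, hF, mFourier_coe, smul_eq_mul] using h

/-- If `f : ℝ^m → ℝ` is continuous, periodic modulo `ℤ^m`, and its Fourier series is
absolutely convergent, then the ergodic sums of `f` along a translation with direction `α`
satisfy `|∑_{k<T} (f(s+kα) - f̂(0))| ≤ ∑_{n ≠ 0} |f̂(n)|/(2‖⟨n,α⟩‖)`, the right-hand side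
being computed in `ℝ≥0∞` (with `a/0 = ∞` for `a ≠ 0`). -/
theorem ergodic_sum_fourier_bound
    {m : ℕ} (hm : 1 ≤ m) (f : (Fin m → ℝ) → ℝ)
    (hf : Continuous f)
    (hper : ∀ (x : Fin m → ℝ) (v : Fin m → ℤ), f (x + fun i => (v i : ℝ)) = f x)
    (fhat : (Fin m → ℤ) → ℂ)
    (hfhat : ∀ n, fhat n = ∫ x in Set.Icc (0 : Fin m → ℝ) 1,
      (f x : ℂ) * Complex.exp (-(2 * π * (∑ i, (n i : ℝ) * x i) : ℝ) * Complex.I))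
    (hsum : Summable fun n : Fin m → ℤ => ‖fhat n‖)
    (s α : Fin m → ℝ) (T : ℕ) (hT : 0 < T) :
    ENNReal.ofReal ‖∑ k ∈ Finset.range T, (((f (s + (k : ℝ) • α)) : ℂ) - fhat 0)‖ ≤
      ∑' n : {n : Fin m → ℤ // n ≠ 0},
        ENNReal.ofReal ‖fhat n.1‖ /
          ENNReal.ofReal (2 * nint (∑ i, (n.1 i : ℝ) * α i)) := by
  let e : ℝ → ℂ := fun x => Complex.exp (Complex.I * ((2 * π * x : ℝ) : ℂ))
  have hseries := hasSum_fourier_of_periodic (f := fun x => (f x : ℂ)) (by fun_prop)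
    (fun x v => by rw [hper]) hfhat hsum.of_norm
  have hterm : ∀ (n : Fin m → ℤ) (k : ℕ),
      e (∑ i, (n i : ℝ) * (s + (k : ℝ) • α) i) =
        e (∑ i, (n i : ℝ) * s i) * e (∑ i, (n i : ℝ) * α i) ^ k := by
    intro n k
    simp only [e, ← Complex.exp_nat_mul, ← Complex.exp_add, Pi.add_apply, Pi.smul_apply,
      smul_eq_mul, mul_add, Finset.sum_add_distrib, mul_left_comm _ (k : ℝ), ← Finset.mul_sum]
    congr 1
    push_cast
    ring
  have hk : ∀ k : ℕ, HasSum (fun n : {n : Fin m → ℤ // n ≠ 0} => fhat n *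
      (e (∑ i, (n.1 i : ℝ) * s i) * e (∑ i, (n.1 i : ℝ) * α i) ^ k))
      ((f (s + (k : ℝ) • α) : ℂ) - fhat 0) := by
    intro k
    have h := hseries (s + (k : ℝ) • α)
    rw [HasSum.hasSum_iff_compl (s := {0}) (hasSum_unique _)] at h
    simp only [Function.comp_def, Set.default_coe_singleton, Pi.zero_apply, Int.cast_zero,
      zero_mul, Finset.sum_const_zero, mul_zero, Complex.ofReal_zero, Complex.exp_zero,
      mul_one] at h
    simp only [← hterm]
    exact h
  have hall := hasSum_sum fun k (_ : k ∈ Finset.range T) => hk k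
  rw [ofReal_norm]
  refine hall.enorm_le_of_bounded ENNReal.summable.hasSum fun n => ?_
  rw [← Finset.mul_sum, ← Finset.mul_sum, ← ofReal_norm, norm_mul, norm_mul,
    show ‖e (∑ i, (n.1 i : ℝ) * s i)‖ = 1 by
      simp only [e, mul_comm Complex.I, Complex.norm_exp_ofReal_mul_I], one_mul]
  rcases eq_or_ne (fhat n) 0 with h0 | h0
  · simp [h0]
  have hnonneg : 0 ≤ nint (∑ i, (n.1 i : ℝ) * α i) := abs_nonneg _
  rcases hnonneg.eq_or_lt with hn | hn
  · rw [← hn, mul_zero, ENNReal.ofReal_zero, ENNReal.div_zero]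
    · exact le_top
    · simpa using h0
  · rw [← ENNReal.ofReal_div_of_pos (by positivity), div_eq_mul_one_div]
    gcongr
    exact norm_sum_exp_le hn T
end

section
/- Let H ≥ 1 be a real number, let S be a finite set, and let g : S → (−1/2, 1/2] be a function such that |g(n)| ≥ 1/H for every n ∈ S and |g(n) − g(m)| > 1/H for all distinct n, m ∈ S. Then Σ_{n ∈ S} 1/|g(n)| ≤ 2 Σ_{1 ≤ h ≤ H/2} H/h, where the sum on the right runs over positive integers h with h ≤ H/2. -/
/-- One-sided version: a `1/H`-separated family in `[1/H, 1/2]` has at most one member in each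
interval `[h/H, (h+1)/H)`. -/
theorem sum_inv_le_of_separated_of_pos
    {H : ℝ} (hH : 0 < H) {ι : Type*} (S : Finset ι) (f : ι → ℝ)
    (hlow : ∀ n ∈ S, 1 / H ≤ f n) (hup : ∀ n ∈ S, f n ≤ 1 / 2)
    (hsep : ∀ n ∈ S, ∀ m ∈ S, n ≠ m → 1 / H < |f n - f m|) :
    ∑ n ∈ S, 1 / f n ≤ ∑ h ∈ Finset.Icc 1 ⌊H / 2⌋₊, H / (h : ℝ) := by
  classical
  have hpos : ∀ n ∈ S, 0 < f n := fun n hn => lt_of_lt_of_le (by positivity) (hlow n hn)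
  have hone : ∀ n ∈ S, 1 ≤ ⌊H * f n⌋₊ := fun n hn => by
    rw [Nat.one_le_floor_iff, mul_comm]
    exact (div_le_iff₀ hH).1 (hlow n hn)
  have hinj : Set.InjOn (fun n => ⌊H * f n⌋₊) (S : Set ι) := by
    intro n hn m hm hnm
    by_contra hne
    have hlt : 1 < H * |f n - f m| := by
      rw [mul_comm]
      exact (div_lt_iff₀ hH).1 (hsep n hn m hm hne)
    rw [← abs_of_pos hH, ← abs_mul, mul_sub] at hlt
    have hn_le := Nat.floor_le (mul_pos hH (hpos n hn)).le
    have hm_le := Nat.floor_le (mul_pos hH (hpos m hm)).le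
    have hn_lt := Nat.lt_floor_add_one (H * f n)
    have hm_lt := Nat.lt_floor_add_one (H * f m)
    have heq : (⌊H * f n⌋₊ : ℝ) = ⌊H * f m⌋₊ := congrArg Nat.cast hnm
    exact hlt.not_gt (abs_lt.2 ⟨by linarith, by linarith⟩)
  calc ∑ n ∈ S, 1 / f n ≤ ∑ n ∈ S, H / (⌊H * f n⌋₊ : ℝ) := by
        refine Finset.sum_le_sum fun n hn => ?_
        have hfloor : (0 : ℝ) < ⌊H * f n⌋₊ := Nat.cast_pos.2 (hone n hn)
        rw [div_le_div_iff₀ (hpos n hn) hfloor, one_mul]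
        exact Nat.floor_le (mul_pos hH (hpos n hn)).le
    _ = ∑ h ∈ S.image (fun n => ⌊H * f n⌋₊), H / (h : ℝ) := by
        rw [Finset.sum_image hinj]
    _ ≤ ∑ h ∈ Finset.Icc 1 ⌊H / 2⌋₊, H / (h : ℝ) := by
        refine Finset.sum_le_sum_of_subset_of_nonneg ?_ fun h _ _ => by positivity
        refine Finset.image_subset_iff.2 fun n hn => Finset.mem_Icc.2 ⟨hone n hn, ?_⟩
        refine Nat.floor_le_floor ?_
        have := mul_le_mul_of_nonneg_left (hup n hn) hH.le
        linarith

/-- Pigeonhole counting bound: if `g` takes values in `(-1/2, 1/2]`, avoids `(-1/H, 1/H)`,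
and its values on `S` are `1/H`-separated, then `∑_{n ∈ S} 1/|g(n)| ≤ 2 ∑_{1 ≤ h ≤ H/2} H/h`. -/
theorem sum_inv_abs_le_of_separated
    (H : ℝ) (hH : 1 ≤ H) {ι : Type*} (S : Finset ι) (g : ι → ℝ)
    (hrange : ∀ n ∈ S, g n ∈ Set.Ioc (-(1 / 2) : ℝ) (1 / 2))
    (hlow : ∀ n ∈ S, 1 / H ≤ |g n|)
    (hsep : ∀ n ∈ S, ∀ m ∈ S, n ≠ m → 1 / H < |g n - g m|) :
    ∑ n ∈ S, 1 / |g n| ≤ 2 * ∑ h ∈ Finset.Icc 1 ⌊H / 2⌋₊, H / (h : ℝ) := by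
  have hpos : 0 < H := by linarith
  have hup : ∀ n ∈ S, |g n| ≤ 1 / 2 := fun n hn =>
    abs_le.2 ⟨(hrange n hn).1.le, (hrange n hn).2⟩
  rw [← Finset.sum_filter_add_sum_filter_not S (fun n => 0 ≤ g n), two_mul]
  refine add_le_add ?_ ?_ <;>
    refine sum_inv_le_of_separated_of_pos hpos _ (fun n => |g n|)
      (fun n hn => hlow n (Finset.mem_filter.1 hn).1)
      (fun n hn => hup n (Finset.mem_filter.1 hn).1) fun n hn m hm hne => ?_ <;>
    obtain ⟨hnS, hn⟩ := Finset.mem_filter.1 hn <;>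
    obtain ⟨hmS, hm⟩ := Finset.mem_filter.1 hm
  · rw [abs_of_nonneg hn, abs_of_nonneg hm]
    exact hsep n hnS m hmS hne
  · rw [abs_of_neg (not_le.1 hn), abs_of_neg (not_le.1 hm), neg_sub_neg, abs_sub_comm]
    exact hsep n hnS m hmS hne
end

section
/- Let d ≥ 1, let α ∈ ℝ^d, let s ∈ [0,1]^d, and let P ⊆ [0,1]^d be a polytope with 0 < λ(P) < 1, where λ is Lebesgue measure. Then Δ_T(s, α, P) = Ω(1), i.e., limsup_{T → ∞} |Δ_T(s, α, P)| > 0. -/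
open MeasureTheory Real

/-- `Δ_T(s, α, A) = ∫_0^T χ_A({s+tα}) dt - T·λ(A)` for `A ⊆ [0,1]^d`. -/
noncomputable def Delta {d : ℕ} (s α : Fin d → ℝ) (A : Set (Fin d → ℝ)) (T : ℝ) : ℝ :=
  (∫ t in (0:ℝ)..T, Set.indicator A (fun _ => (1:ℝ)) (fun i => Int.fract (s i + t * α i)))
    - T * (volume A).toReal

/-- On an interval over which `s + t * α` varies by less than `1`, its floor is constant on one of
the two halves. -/
theorem floor_const_on_half {s α L : ℝ} (hL : 0 < L) (h : L * |α| < 1) (a : ℝ) :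
    ∃ b, a ≤ b ∧ b + L / 2 ≤ a + L ∧
      ∃ n : ℤ, ∀ t ∈ Set.Icc b (b + L / 2), ⌊s + t * α⌋ = n := by
  have mono : ∀ x y : ℝ, (x - y) * α ≤ 0 → ⌊s + x * α⌋ ≤ ⌊s + y * α⌋ := fun x y hxy =>
    Int.floor_mono (by linarith)
  have near : ∀ x y : ℝ, (x - y) * α < 1 → ⌊s + x * α⌋ ≤ ⌊s + y * α⌋ + 1 := fun x y hxy => by
    rw [← Int.floor_add_one]
    exact Int.floor_mono (by linarith)
  rcases le_total 0 α with hα | hα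
  · rw [abs_of_nonneg hα] at h
    have h₁ := mono a (a + L / 2) (by nlinarith)
    have h₂ := mono (a + L / 2) (a + L) (by nlinarith)
    have h₃ := near (a + L) a (by linarith)
    by_cases hm : ⌊s + (a + L / 2) * α⌋ = ⌊s + a * α⌋
    · refine ⟨a, le_rfl, by linarith, ⌊s + a * α⌋, fun t ht => ?_⟩
      have h₄ := mono a t (by nlinarith [ht.1])
      have h₅ := mono t (a + L / 2) (by nlinarith [ht.2])
      lia
    · refine ⟨a + L / 2, by linarith, by linarith, ⌊s + (a + L) * α⌋, fun t ht => ?_⟩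
      have h₄ := mono (a + L / 2) t (by nlinarith [ht.1])
      have h₅ := mono t (a + L) (by nlinarith [ht.2])
      lia
  · rw [abs_of_nonpos hα] at h
    have h₁ := mono (a + L / 2) a (by nlinarith)
    have h₂ := mono (a + L) (a + L / 2) (by nlinarith)
    have h₃ := near a (a + L) (by linarith)
    by_cases hm : ⌊s + (a + L / 2) * α⌋ = ⌊s + a * α⌋
    · refine ⟨a, le_rfl, by linarith, ⌊s + a * α⌋, fun t ht => ?_⟩
      have h₄ := mono t a (by nlinarith [ht.1])
      have h₅ := mono (a + L / 2) t (by nlinarith [ht.2])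
      lia
    · refine ⟨a + L / 2, by linarith, by linarith, ⌊s + (a + L) * α⌋, fun t ht => ?_⟩
      have h₄ := mono t (a + L / 2) (by nlinarith [ht.1])
      have h₅ := mono (a + L) t (by nlinarith [ht.2])
      lia

/-- Beyond any time there are intervals of a fixed length during which finitely many linear flows
on the circle do not wrap around. -/
theorem exists_floor_const {ι : Type*} (s α : ι → ℝ) (S : Finset ι) :
    ∃ L > 0, ∀ a : ℝ, ∃ b ≥ a, ∃ n : ι → ℤ,
      ∀ i ∈ S, ∀ t ∈ Set.Icc b (b + L), ⌊s i + t * α i⌋ = n i := by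
  classical
  induction S using Finset.induction_on with
  | empty => exact ⟨1, one_pos, fun a => ⟨a, le_rfl, 0, by simp⟩⟩
  | insert i S hi ih =>
    obtain ⟨L, hL, ih⟩ := ih
    have hA : 0 < |α i| + 1 := by positivity
    set M := min L (1 / (|α i| + 1))
    have hM0 : 0 < M := lt_min hL (by positivity)
    have hMα : M * |α i| < 1 := by
      have h₁ : M * (|α i| + 1) ≤ 1 := (le_div_iff₀ hA).1 (min_le_right _ _)
      linarith
    refine ⟨M / 2, by positivity, fun a => ?_⟩
    obtain ⟨b, hb, n, hn⟩ := ih a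
    obtain ⟨c, hbc, hcM, m, hm⟩ := floor_const_on_half (s := s i) hM0 hMα b
    have hML : M ≤ L := min_le_left _ _
    refine ⟨c, hb.le.trans hbc, Function.update n i m, fun j hj t ht => ?_⟩
    rcases Finset.mem_insert.1 hj with rfl | hjS
    · simpa using hm t ht
    · rw [Function.update_of_ne (by rintro rfl; exact hi hjS)]
      exact hn j hjS t ⟨hbc.trans ht.1, by linarith [ht.2]⟩

/-- An interval contains a third which is either inside or outside a given order-connected set. -/
theorem exists_third_subset_or_disjoint {A : Set ℝ} {L : ℝ} (hL : 0 < L) (a : ℝ)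
    (hA : (A ∩ Set.Icc a (a + L)).OrdConnected) :
    ∃ b, a ≤ b ∧ ((∀ t ∈ Set.Icc b (b + L / 3), t ∈ A) ∨ ∀ t ∈ Set.Icc b (b + L / 3), t ∉ A) := by
  have mem : ∀ p ∈ Set.Icc a (a + L), p ∉ A → ∀ x ∈ Set.Icc a p, x ∈ A →
      ∀ y ∈ Set.Icc p (a + L), y ∉ A := fun p hp hpA x hx hxA y hy hyA =>
    hpA (hA.out ⟨hxA, hx.1, hx.2.trans hp.2⟩ ⟨hyA, hp.1.trans hy.1, hy.2⟩ ⟨hx.2, hy.1⟩).1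
  have out : ∀ p ∈ Set.Icc (a + L / 3) (a + 2 * L / 3), p ∉ A →
      ∃ b, a ≤ b ∧ ∀ t ∈ Set.Icc b (b + L / 3), t ∉ A := by
    intro p hp hpA
    by_cases hx : ∃ x ∈ Set.Icc a p, x ∈ A
    · obtain ⟨x, hx, hxA⟩ := hx
      exact ⟨p, by linarith [hp.1], fun t ht =>
        mem p ⟨by linarith [hp.1], by linarith [hp.2]⟩ hpA x hx hxA t
          ⟨ht.1, by linarith [ht.2, hp.2]⟩⟩
    · exact ⟨a, le_rfl, fun t ht htA => hx ⟨t, ⟨ht.1, ht.2.trans hp.1⟩, htA⟩⟩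
  by_cases h : ∀ t ∈ Set.Icc (a + L / 3) (a + 2 * L / 3), t ∈ A
  · exact ⟨a + L / 3, by linarith, .inl fun t ht => h t ⟨ht.1, by linarith [ht.2]⟩⟩
  · push Not at h
    obtain ⟨p, hp, hpA⟩ := h
    obtain ⟨b, hb, h⟩ := out p hp hpA
    exact ⟨b, hb, .inr h⟩

/-- Beyond any time there are intervals of a fixed length during which a linear flow on the torus
stays inside, or stays outside, a given convex set. -/
theorem exists_fract_mem_or_notMem {d : ℕ} (s α : Fin d → ℝ) {P : Set (Fin d → ℝ)}
    (hP : Convex ℝ P) :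
    ∃ L > 0, ∀ a : ℝ, ∃ b ≥ a,
      (∀ t ∈ Set.Icc b (b + L), (fun i => Int.fract (s i + t * α i)) ∈ P) ∨
      ∀ t ∈ Set.Icc b (b + L), (fun i => Int.fract (s i + t * α i)) ∉ P := by
  obtain ⟨L, hL, h⟩ := exists_floor_const s α Finset.univ
  refine ⟨L / 3, by positivity, fun a => ?_⟩
  obtain ⟨b, hb, n, hn⟩ := h a
  have hfract : ∀ t ∈ Set.Icc b (b + L),
      (fun i => Int.fract (s i + t * α i)) = fun i => s i + t * α i - n i := fun t ht => by
    funext i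
    rw [Int.fract, hn i (Finset.mem_univ i) t ht]
  have hconv : Convex ℝ
      ({t : ℝ | (fun i => Int.fract (s i + t * α i)) ∈ P} ∩ Set.Icc b (b + L)) := by
    rintro x ⟨hx, hxI⟩ y ⟨hy, hyI⟩ p q hp hq hpq
    have hI := convex_Icc b (b + L) hxI hyI hp hq hpq
    refine ⟨?_, hI⟩
    rw [Set.mem_ofPred_eq, hfract _ ‹_›] at hx hy
    rw [Set.mem_ofPred_eq, hfract _ hI]
    convert hP hx hy hp hq hpq using 1
    funext i
    simp only [Pi.add_apply, Pi.smul_apply, smul_eq_mul]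
    linear_combination (n i - s i : ℝ) * hpq
  obtain ⟨c, hc, h⟩ := exists_third_subset_or_disjoint hL b hconv.ordConnected
  exact ⟨c, hb.le.trans hc, h⟩

theorem Delta_sub_Delta {d : ℕ} (s α : Fin d → ℝ) {P : Set (Fin d → ℝ)} (hP : MeasurableSet P)
    (a b : ℝ) :
    Delta s α P b - Delta s α P a =
      (∫ t in a..b, Set.indicator P (fun _ => (1 : ℝ)) (fun i => Int.fract (s i + t * α i)))
        - (b - a) * (volume P).toReal := by
  have hmeas : Measurable fun t : ℝ =>
      Set.indicator P (fun _ => (1 : ℝ)) (fun i => Int.fract (s i + t * α i)) :=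
    (measurable_const.indicator hP).comp <| measurable_pi_lambda _ fun i =>
      measurable_fract.comp (by fun_prop)
  have hint : ∀ u v : ℝ, IntervalIntegrable (fun t : ℝ =>
      Set.indicator P (fun _ => (1 : ℝ)) (fun i => Int.fract (s i + t * α i))) volume u v :=
    fun u v => (intervalIntegrable_const (c := (1 : ℝ))).mono_fun hmeas.aestronglyMeasurable <|
      .of_forall fun t => norm_indicator_le_norm_self (fun _ => (1 : ℝ)) _
  rw [← intervalIntegral.integral_interval_sub_left (hint 0 b) (hint 0 a), Delta, Delta]
  ring

/-- For any polytope `P ⊆ [0,1]^d` with `0 < λ(P) < 1`, we have `Δ_T(s,α,P) = Ω(1)`: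
there is `c > 0` with `|Δ_T(s,α,P)| ≥ c` for arbitrarily large `T`. -/
theorem delta_omega_one
    {d : ℕ} (hd : 1 ≤ d) (α : Fin d → ℝ)
    (s : Fin d → ℝ) (hs : s ∈ Set.Icc (0 : Fin d → ℝ) 1)
    (P : Set (Fin d → ℝ)) (hpoly : IsPolytope P) (hsub : P ⊆ Set.Icc 0 1)
    (h0 : 0 < (volume P).toReal) (h1 : (volume P).toReal < 1) :
    ∃ c > 0, ∃ᶠ T : ℝ in Filter.atTop, c ≤ |Delta s α P T| := by
  obtain ⟨V, rfl⟩ := hpoly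
  have hmeas : MeasurableSet (convexHull ℝ (V : Set (Fin d → ℝ))) :=
    (V.finite_toSet.isClosed_convexHull ℝ).measurableSet
  obtain ⟨L, hL, h⟩ := exists_fract_mem_or_notMem s α (convex_convexHull ℝ (V : Set (Fin d → ℝ)))
  set P := convexHull ℝ (V : Set (Fin d → ℝ))
  set v := (volume P).toReal
  have hv : 0 < min v (1 - v) := lt_min h0 (by linarith)
  refine ⟨L * min v (1 - v) / 2, by positivity, Filter.frequently_atTop.2 fun a => ?_⟩
  obtain ⟨b, hb, hcase⟩ := h a
  have hsubΔ := Delta_sub_Delta s α hmeas b (b + L)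
  have huIcc : Set.uIcc b (b + L) = Set.Icc b (b + L) := Set.uIcc_of_le (by linarith)
  have hjump : L * min v (1 - v) ≤ |Delta s α P (b + L) - Delta s α P b| := by
    rw [hsubΔ]
    rcases hcase with hin | hout
    · rw [intervalIntegral.integral_congr (g := fun _ => (1 : ℝ)) fun t ht =>
        Set.indicator_of_mem (hin t (huIcc ▸ ht)) _, intervalIntegral.integral_const]
      refine le_trans ?_ (le_abs_self _)
      have := mul_le_mul_of_nonneg_left (min_le_right v (1 - v)) hL.le
      simp only [smul_eq_mul]
      linarith
    · rw [intervalIntegral.integral_congr (g := fun _ => (0 : ℝ)) fun t ht =>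
        Set.indicator_of_notMem (hout t (huIcc ▸ ht)) _, intervalIntegral.integral_const]
      refine le_trans ?_ (neg_le_abs _)
      have := mul_le_mul_of_nonneg_left (min_le_left v (1 - v)) hL.le
      simp only [smul_eq_mul]
      linarith
  have htri := abs_sub (Delta s α P (b + L)) (Delta s α P b)
  by_cases hbΔ : L * min v (1 - v) / 2 ≤ |Delta s α P b|
  · exact ⟨b, hb, hbΔ⟩
  · exact ⟨b + L, by linarith, by linarith⟩
end

section
/- For every d ≥ 2 there exists a continuous curve g = (g_1, …, g_d) : [0,∞) → ℝ^d whose arc length ℓ_T on [0,T] satisfies ℓ_T = cT for some constant c > 0, and a constant C > 0, such that for all T > 0, sup_{R ∈ 𝓡} |Δ_T(g, R)| ≤ C, where 𝓡 is the family of axis-parallel boxes R = ∏_{k=1}^d [a_k, b_k] ⊆ [0,1]^d. In particular, for d ≥ 3 and 0 < ε < d − 2, the statement that sup_{R ∈ 𝓡} |Δ_T(g, R)/T| = Ω((log ℓ_T)^{d−2−ε}/ℓ_T) fails for this curve, so there is no van Aardenne–Ehrenfest type lower bound for the mod 1 discrepancy of continuous curves. -/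
open MeasureTheory Real Filter

/-- `Δ_T(g, A) = ∫_0^T χ_A({g(t)}) dt - T·λ(A)` for a curve `g : [0,∞) → ℝ^d` and
`A ⊆ [0,1]^d`. -/
noncomputable def DeltaCurve {d : ℕ} (g : ℝ → (Fin d → ℝ)) (A : Set (Fin d → ℝ))
    (T : ℝ) : ℝ :=
  (∫ t in (0:ℝ)..T, Set.indicator A (fun _ => (1:ℝ)) (fun i => Int.fract (g t i)))
    - T * (volume A).toReal

theorem ENNReal.tsum_fin_pi_prod {ι : Type*} (f : ι → ENNReal) (d : ℕ) :
    ∑' n : Fin d → ι, ∏ i, f (n i) = (∑' k, f k) ^ d := by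
  induction d with
  | zero => simp
  | succ d ih =>
    rw [← (Fin.consEquiv (fun _ : Fin (d + 1) => ι)).tsum_eq, ENNReal.tsum_prod']
    simp [Fin.consEquiv, Fin.prod_univ_succ, ENNReal.tsum_mul_left, ENNReal.tsum_mul_right, ih,
      pow_succ, mul_comm]

theorem lintegral_Icc_abs_add_rpow_le {p : ℝ} (hp0 : 0 < p) (hp : p < 1) :
    ∃ K : ENNReal, K ≠ ⊤ ∧ ∀ v : ℝ,
      ∫⁻ u in Set.Icc (0 : ℝ) 1, ENNReal.ofReal |u + v| ^ (-p) ≤ K := by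
  let φ : ℝ → ENNReal := (Set.Icc (0 : ℝ) 1).indicator fun x => ENNReal.ofReal x ^ (-p)
  have hφmeas : Measurable φ := Measurable.indicator (by fun_prop) measurableSet_Icc
  have hφ : ∫⁻ x, φ x ≠ ⊤ := by
    rw [lintegral_indicator measurableSet_Icc, setLIntegral_congr Ioc_ae_eq_Icc.symm]
    have hint : IntegrableOn (fun x : ℝ => x ^ (-p)) (Set.Ioc 0 1) :=
      (intervalIntegrable_iff_integrableOn_Ioc_of_le zero_le_one).mp
        (intervalIntegral.intervalIntegrable_rpow' (by linarith))
    rw [setLIntegral_congr_fun (g := fun x => ENNReal.ofReal (x ^ (-p))) measurableSet_Ioc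
      fun x hx => ENNReal.ofReal_rpow_of_pos hx.1]
    exact hint.lintegral_lt_top.ne
  have hle : ∀ x : ℝ, ENNReal.ofReal |x| ^ (-p) ≤ φ x + φ (-x) + 1 := by
    intro x
    by_cases hx : |x| ≤ 1
    · rcases le_total 0 x with h | h
      · have : φ x = ENNReal.ofReal |x| ^ (-p) := by
          rw [abs_of_nonneg h] at hx ⊢
          exact Set.indicator_of_mem (Set.mem_Icc.mpr ⟨h, hx⟩) _
        rw [← this, add_assoc]
        exact le_self_add
      · have : φ (-x) = ENNReal.ofReal |x| ^ (-p) := by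
          rw [abs_of_nonpos h] at hx ⊢
          exact Set.indicator_of_mem (Set.mem_Icc.mpr ⟨neg_nonneg.mpr h, hx⟩) _
        rw [← this, add_comm (φ x), add_assoc]
        exact le_self_add
    · refine le_trans ?_ le_add_self
      rw [ENNReal.rpow_neg, ENNReal.inv_le_one]
      exact ENNReal.one_le_rpow (ENNReal.one_le_ofReal.mpr (not_le.mp hx).le) hp0
  refine ⟨(∫⁻ x, φ x) + (∫⁻ x, φ x) + 1, by finiteness, fun v => ?_⟩
  calc ∫⁻ u in Set.Icc (0 : ℝ) 1, ENNReal.ofReal |u + v| ^ (-p)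
      ≤ ∫⁻ u in Set.Icc (0 : ℝ) 1, (φ (u + v) + φ (-(u + v)) + 1) :=
        lintegral_mono fun u => hle _
    _ = (∫⁻ u in Set.Icc (0 : ℝ) 1, φ (u + v)) +
          (∫⁻ u in Set.Icc (0 : ℝ) 1, φ (-(u + v))) + 1 := by
        rw [lintegral_add_left (by fun_prop), lintegral_add_left (by fun_prop)]
        simp
    _ ≤ (∫⁻ u, φ (u + v)) + (∫⁻ u, φ (-(u + v))) + 1 := by
        gcongr <;> exact Measure.restrict_le_self
    _ = (∫⁻ x, φ x) + (∫⁻ x, φ x) + 1 := by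
        rw [lintegral_add_right_eq_self φ v,
          lintegral_add_right_eq_self (fun x => φ (-x)) v, lintegral_neg_eq_self]

theorem ENNReal.tsum_max_one_abs_int_rpow_ne_top {q : ℝ} (hq : 1 < q) :
    ∑' k : ℤ, ENNReal.ofReal (max 1 |(k : ℝ)|) ^ (-q) ≠ ⊤ := by
  have hs : Summable fun k : ℤ => (max 1 |(k : ℝ)|) ^ (-q) := by
    refine (summable_congr_cofinite ?_).mp (Real.summable_abs_int_rpow hq)
    filter_upwards [(Set.finite_singleton (0 : ℤ)).compl_mem_cofinite] with k hk
    have : (1 : ℝ) ≤ |(k : ℝ)| := by exact_mod_cast Int.one_le_abs hk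
    rw [max_eq_right this]
  have := hs.tsum_ofReal_ne_top
  simpa only [ENNReal.ofReal_rpow_of_pos (lt_of_lt_of_le one_pos (le_max_left 1 _))] using this

theorem lintegral_abs_dot_rpow_le {d : ℕ} {p : ℝ} {K : ENNReal}
    (hK : ∀ v : ℝ, ∫⁻ u in Set.Icc (0 : ℝ) 1, ENNReal.ofReal |u + v| ^ (-p) ≤ K)
    (n : Fin d → ℤ) (j : Fin d) (hj : n j ≠ 0) :
    ∫⁻ α, ENNReal.ofReal |∑ i, (n i : ℝ) * α i| ^ (-p)
      ∂(Measure.pi fun _ : Fin d => volume.restrict (Set.Icc (0 : ℝ) 1)) ≤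
      ENNReal.ofReal (max 1 |(n j : ℝ)|) ^ (-p) * K := by
  have hprob : IsProbabilityMeasure (volume.restrict (Set.Icc (0 : ℝ) 1)) := ⟨by simp⟩
  have hmeas : Measurable fun α : Fin d → ℝ =>
      ENNReal.ofReal |∑ i, (n i : ℝ) * α i| ^ (-p) := by fun_prop
  have hnj : (n j : ℝ) ≠ 0 := by exact_mod_cast hj
  have h1 : (1 : ℝ) ≤ |(n j : ℝ)| := by exact_mod_cast Int.one_le_abs hj
  rw [max_eq_right h1, lintegral_eq_lmarginal_univ (0 : Fin d → ℝ),
    lmarginal_erase' _ hmeas (Finset.mem_univ j)]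
  refine (lmarginal_mono (g := fun _ => ENNReal.ofReal |(n j : ℝ)| ^ (-p) * K) ?_ _).trans ?_
  · intro α
    set s := (∑ i ∈ Finset.univ.erase j, (n i : ℝ) * α i) / n j with hs
    have key : ∀ u : ℝ, ∑ i, (n i : ℝ) * Function.update α j u i = n j * (u + s) := by
      intro u
      rw [← Finset.add_sum_erase _ _ (Finset.mem_univ j), Function.update_self, hs, mul_add,
        mul_div_cancel₀ _ hnj]
      congr 1
      refine Finset.sum_congr rfl fun i hi => ?_
      rw [Function.update_of_ne (Finset.ne_of_mem_erase hi)]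
    simp only [key, abs_mul, ENNReal.ofReal_mul (abs_nonneg (n j : ℝ))]
    have : ∀ u : ℝ, (ENNReal.ofReal |(n j : ℝ)| * ENNReal.ofReal |u + s|) ^ (-p) =
        ENNReal.ofReal |(n j : ℝ)| ^ (-p) * ENNReal.ofReal |u + s| ^ (-p) := fun u =>
      ENNReal.mul_rpow_of_ne_top ENNReal.ofReal_ne_top ENNReal.ofReal_ne_top _
    simp only [this]
    rw [lintegral_const_mul _ (by fun_prop)]
    gcongr
    exact hK s
  · simp [lmarginal]

/-- Almost every direction is good enough for the small-denominator series to converge. -/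
theorem exists_summable_small_denominators {d : ℕ} (hd : 0 < d) :
    ∃ α : Fin d → ℝ, (∀ n : Fin d → ℤ, n ≠ 0 → ∑ i, (n i : ℝ) * α i ≠ 0) ∧
      Summable fun n : Fin d → ℤ =>
        (∏ i, (max 1 |(n i : ℝ)|)⁻¹) / |∑ i, (n i : ℝ) * α i| := by
  have hprob : IsProbabilityMeasure (volume.restrict (Set.Icc (0 : ℝ) 1)) := ⟨by simp⟩
  have hd' : (0 : ℝ) < d := by exact_mod_cast hd
  obtain ⟨p, hp0, hp1, hpd⟩ : ∃ p : ℝ, 0 < p ∧ p < 1 ∧ 1 < p + p / d := by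
    refine ⟨(2 * d + 1) / (2 * d + 2), by positivity, ?_, ?_⟩
    · rw [div_lt_one (by positivity)]; linarith
    · rw [← sub_pos]
      have : (2 * d + 1 : ℝ) / (2 * d + 2) + (2 * d + 1) / (2 * d + 2) / d - 1 = 1 / (2 * d) := by
        field_simp; ring
      rw [this]; positivity
  obtain ⟨K, hKtop, hK⟩ := lintegral_Icc_abs_add_rpow_le hp0 hp1
  let M : ℤ → ENNReal := fun k => ENNReal.ofReal (max 1 |(k : ℝ)|)
  have hM0 : ∀ k, M k ≠ 0 := fun k =>
    (ENNReal.ofReal_pos.mpr (lt_of_lt_of_le one_pos (le_max_left 1 _))).ne'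
  have hMtop : ∀ k, M k ≠ ⊤ := fun k => ENNReal.ofReal_ne_top
  let μ := Measure.pi fun _ : Fin d => volume.restrict (Set.Icc (0 : ℝ) 1)
  let G : (Fin d → ℤ) → (Fin d → ℝ) → ENNReal := fun n α =>
    if n = 0 then 0 else (∏ i, M (n i) ^ (-p)) * ENNReal.ofReal |∑ i, (n i : ℝ) * α i| ^ (-p)
  have hGmeas : ∀ n, Measurable (G n) := by
    intro n
    by_cases hn : n = 0
    · simp [G, hn]
    · simp only [G, hn, if_false]; fun_prop
  have hGint : ∀ n, ∫⁻ α, G n α ∂μ ≤ (∏ i, M (n i) ^ (-(p + p / d))) * K := by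
    intro n
    by_cases hn : n = 0
    · simp [G, hn]
    simp only [G, hn, if_false]
    rw [lintegral_const_mul _ (by fun_prop)]
    have : Nonempty (Fin d) := ⟨⟨0, hd⟩⟩
    obtain ⟨j, hj⟩ := Finite.exists_max fun i => |n i|
    have hj0 : n j ≠ 0 := by
      intro h0
      apply hn
      ext i
      have := hj i
      simpa [h0] using this
    have hle : M (n j) ^ (-p) ≤ ∏ i, M (n i) ^ (-(p / d)) := by
      calc M (n j) ^ (-p) = ∏ _i : Fin d, M (n j) ^ (-(p / d)) := by
            rw [Finset.prod_const, Finset.card_univ, Fintype.card_fin, ← ENNReal.rpow_natCast,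
              ← ENNReal.rpow_mul]
            congr 1; field_simp
        _ ≤ _ := by
            refine Finset.prod_le_prod' fun i _ => ?_
            rw [ENNReal.rpow_neg, ENNReal.rpow_neg]
            gcongr
            refine ENNReal.ofReal_le_ofReal (max_le_max le_rfl ?_)
            exact_mod_cast hj i
    calc (∏ i, M (n i) ^ (-p)) * ∫⁻ α, ENNReal.ofReal |∑ i, (n i : ℝ) * α i| ^ (-p) ∂μ
        ≤ (∏ i, M (n i) ^ (-p)) * ((∏ i, M (n i) ^ (-(p / d))) * K) := by
          gcongr
          exact (lintegral_abs_dot_rpow_le hK n j hj0).trans (by gcongr)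
      _ = _ := by
          rw [← mul_assoc, ← Finset.prod_mul_distrib]
          congr 2
          ext i
          rw [← ENNReal.rpow_add _ _ (hM0 _) (hMtop _)]
          congr 1; ring
  have hfin : ∫⁻ α, ∑' n, G n α ∂μ ≠ ⊤ := by
    rw [lintegral_tsum fun n => (hGmeas n).aemeasurable]
    refine ne_top_of_le_ne_top ?_ (ENNReal.tsum_le_tsum hGint)
    rw [ENNReal.tsum_mul_right, ENNReal.tsum_fin_pi_prod (fun k => M k ^ (-(p + p / d)))]
    exact ENNReal.mul_ne_top
      (ENNReal.pow_ne_top (ENNReal.tsum_max_one_abs_int_rpow_ne_top hpd)) hKtop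
  obtain ⟨α, hα⟩ := (ae_lt_top (Measurable.tsum hGmeas) hfin).exists
  have hne : ∀ n : Fin d → ℤ, n ≠ 0 → ∑ i, (n i : ℝ) * α i ≠ 0 := by
    intro n hn h0
    have hlt : G n α < ⊤ := (ENNReal.le_tsum n).trans_lt hα
    simp only [G, hn, if_false, h0, abs_zero, ENNReal.ofReal_zero,
      ENNReal.zero_rpow_of_neg (neg_lt_zero.mpr hp0)] at hlt
    rw [ENNReal.mul_top] at hlt
    · exact lt_irrefl _ hlt
    · refine Finset.prod_ne_zero_iff.mpr fun i _ => ?_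
      rw [ENNReal.rpow_neg]
      exact ENNReal.inv_ne_zero.mpr (ENNReal.rpow_ne_top_of_nonneg hp0.le (hMtop _))
  refine ⟨α, hne, ?_⟩
  set x : (Fin d → ℤ) → ℝ := fun n => (∏ i, (max 1 |(n i : ℝ)|)⁻¹) / |∑ i, (n i : ℝ) * α i| with hx
  have hx0 : ∀ n, 0 ≤ x n := fun n => by positivity
  have hGx : ∀ n, (G n α).toReal = x n ^ p := by
    intro n
    by_cases hn : n = 0
    · simp [G, hn, hx, Real.zero_rpow hp0.ne']
    · simp only [G, hn, if_false, hx, M, ENNReal.toReal_mul, ENNReal.toReal_prod,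
        ← ENNReal.toReal_rpow]
      rw [Real.div_rpow (by positivity) (by positivity),
        ← Real.finsetProd_rpow _ _ (fun i _ => by positivity), div_eq_mul_inv]
      congr 1
      · refine Finset.prod_congr rfl fun i _ => ?_
        rw [ENNReal.toReal_ofReal (by positivity), Real.inv_rpow (by positivity),
          Real.rpow_neg (by positivity)]
      · rw [ENNReal.toReal_ofReal (by positivity), Real.rpow_neg (by positivity)]
  have hsum : Summable fun n => x n ^ p := by
    simpa only [hGx] using ENNReal.summable_toReal hα.ne
  refine hsum.of_norm_bounded_eventually ?_
  filter_upwards [hsum.tendsto_cofinite_zero.eventually (gt_mem_nhds one_pos)] with n hn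
  have hx1 : x n ≤ 1 := by
    by_contra h
    exact absurd (Real.one_le_rpow (not_le.mp h).le hp0.le) (not_le.mpr hn)
  rw [Real.norm_of_nonneg (hx0 n)]
  exact Real.self_le_rpow_of_le_one (hx0 n) hx1 hp1.le

/-- Characteristic function of the arc `[a, b] ⊆ [0, 1]` on the circle `ℝ / ℤ`. -/
noncomputable def arcIndicator (a b : ℝ) (y : UnitAddCircle) : ℂ :=
  (Set.Icc a b).indicator 1 (AddCircle.equivIco 1 0 y : ℝ)

theorem arcIndicator_coe (a b t : ℝ) :
    arcIndicator a b (t : UnitAddCircle) = (Set.Icc a b).indicator 1 (Int.fract t) := by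
  rw [arcIndicator, AddCircle.coe_equivIco_mk_apply]
  simp

theorem measurable_arcIndicator (a b : ℝ) : Measurable (arcIndicator a b) :=
  ((measurable_const (a := (1 : ℂ))).indicator measurableSet_Icc).comp
    (measurable_subtype_coe.comp (AddCircle.measurableEquivIco 1 0).measurable)

theorem norm_arcIndicator_le (a b : ℝ) (y : UnitAddCircle) : ‖arcIndicator a b y‖ ≤ 1 :=
  (norm_indicator_le_norm_self _ _).trans (by simp)

theorem continuousAt_arcIndicator {a b : ℝ} {y : UnitAddCircle} (h0 : y ≠ ((0 : ℝ) : UnitAddCircle))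
    (ha : y ≠ (a : UnitAddCircle)) (hb : y ≠ (b : UnitAddCircle)) :
    ContinuousAt (arcIndicator a b) y := by
  have hy : ((AddCircle.equivIco 1 0 y : ℝ) : UnitAddCircle) = y := AddCircle.coe_equivIco
  have hsa : (AddCircle.equivIco 1 0 y : ℝ) ≠ a := fun h => ha (by rw [← hy, h])
  have hsb : (AddCircle.equivIco 1 0 y : ℝ) ≠ b := fun h => hb (by rw [← hy, h])
  have hcont : ContinuousAt (fun y : UnitAddCircle => (AddCircle.equivIco 1 0 y : ℝ)) y :=
    continuous_subtype_val.continuousAt.comp (AddCircle.continuousAt_equivIco 1 0 h0)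
  refine ContinuousAt.comp (g := (Set.Icc a b).indicator (1 : ℝ → ℂ)) ?_ hcont
  set s := (AddCircle.equivIco 1 0 y : ℝ)
  by_cases hs : s ∈ Set.Icc a b
  · refine (continuousAt_const (y := (1 : ℂ))).congr ?_
    filter_upwards [Icc_mem_nhds (hs.1.lt_of_ne' hsa) (hs.2.lt_of_ne hsb)] with u hu
    exact (Set.indicator_of_mem hu (1 : ℝ → ℂ)).symm
  · refine (continuousAt_const (y := (0 : ℂ))).congr ?_
    filter_upwards [isClosed_Icc.isOpen_compl.mem_nhds hs] with u hu
    exact (Set.indicator_of_notMem hu (1 : ℝ → ℂ)).symm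

theorem fourierCoeff_arcIndicator {a b : ℝ} (ha : 0 ≤ a) (hab : a ≤ b) (hb : b ≤ 1) (n : ℤ) :
    fourierCoeff (arcIndicator a b) n = ∫ x in a..b, fourier (-n) (x : UnitAddCircle) := by
  rw [fourierCoeff_eq_intervalIntegral _ n 0, zero_add, one_div_one, one_smul,
    intervalIntegral.integral_of_le zero_le_one, intervalIntegral.integral_of_le hab,
    integral_Ioc_eq_integral_Ioo, integral_Ioc_eq_integral_Ioo]
  have h : ∀ x ∈ Set.Ioo (0 : ℝ) 1, fourier (-n) (x : UnitAddCircle) • arcIndicator a b x =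
      (Set.Icc a b).indicator (fun x : ℝ => fourier (-n) (x : UnitAddCircle)) x := by
    intro x hx
    rw [arcIndicator_coe, Int.fract_eq_self.mpr ⟨hx.1.le, hx.2⟩]
    by_cases hxs : x ∈ Set.Icc a b <;> simp [hxs, -fourier_apply]
  rw [setIntegral_congr_fun measurableSet_Ioo h, ← integral_Icc_eq_integral_Ioo,
    ← integral_Icc_eq_integral_Ioo, setIntegral_indicator measurableSet_Icc,
    Set.inter_eq_self_of_subset_right (Set.Icc_subset_Icc ha hb)]

theorem norm_integral_cexp_mul_I_le {c : ℝ} (hc : c ≠ 0) (a b : ℝ) :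
    ‖∫ x in a..b, Complex.exp ((2 * π * c * x : ℝ) * Complex.I)‖ ≤ 1 / |c| := by
  have hc' : ((2 * π * c : ℝ) * Complex.I : ℂ) ≠ 0 := by
    simp [hc, pi_ne_zero]
  have h : ∀ x : ℝ, ((2 * π * c * x : ℝ) * Complex.I : ℂ) = ((2 * π * c : ℝ) * Complex.I) * x := by
    intro x; push_cast; ring
  simp only [h]
  rw [integral_exp_mul_complex hc', norm_div]
  have hn : ‖((2 * π * c : ℝ) * Complex.I : ℂ)‖ = 2 * π * |c| := by
    simp [abs_of_pos pi_pos]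
  rw [hn, ← h, ← h, div_le_div_iff₀ (by positivity) (by positivity), one_mul]
  have := norm_sub_le (Complex.exp ((2 * π * c * b : ℝ) * Complex.I))
    (Complex.exp ((2 * π * c * a : ℝ) * Complex.I))
  rw [Complex.norm_exp_ofReal_mul_I, Complex.norm_exp_ofReal_mul_I] at this
  gcongr
  linarith [pi_gt_three]

theorem norm_fourierCoeff_arcIndicator_le {a b : ℝ} (ha : 0 ≤ a) (hab : a ≤ b) (hb : b ≤ 1)
    (n : ℤ) : ‖fourierCoeff (arcIndicator a b) n‖ ≤ (max 1 |(n : ℝ)|)⁻¹ := by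
  rw [fourierCoeff_arcIndicator ha hab hb]
  rcases eq_or_ne n 0 with rfl | hn
  · have h : ‖((b - a : ℝ) : ℂ)‖ ≤ 1 := by
      rw [Complex.norm_of_nonneg (sub_nonneg.mpr hab)]
      linarith
    simpa using h
  · have h1 : (1 : ℝ) ≤ |(n : ℝ)| := by exact_mod_cast Int.one_le_abs hn
    rw [max_eq_right h1, ← one_div, ← abs_neg (n : ℝ)]
    convert norm_integral_cexp_mul_I_le (c := -(n : ℝ)) (by simpa using hn) a b using 4
    rw [fourier_coe_apply]
    congr 1; push_cast; ring

/-- Characteristic function of the box `∏ [a i, b i] ⊆ [0, 1]^d` on the torus `(ℝ / ℤ)^d`. -/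
noncomputable def boxIndicator {d : ℕ} (a b : Fin d → ℝ) (x : UnitAddTorus (Fin d)) : ℂ :=
  ∏ i, arcIndicator (a i) (b i) (x i)

section Torus

variable {d : ℕ} {a b : Fin d → ℝ}

theorem measurable_boxIndicator : Measurable (boxIndicator a b) :=
  Finset.measurable_fun_prod _ fun i _ =>
    (measurable_arcIndicator (a i) (b i)).comp (measurable_pi_apply i)

theorem norm_boxIndicator_le (x : UnitAddTorus (Fin d)) : ‖boxIndicator a b x‖ ≤ 1 := by
  rw [boxIndicator, norm_prod]
  exact Finset.prod_le_one (fun i _ => norm_nonneg _) fun i _ => norm_arcIndicator_le _ _ _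

theorem mFourierCoeff_boxIndicator (n : Fin d → ℤ) :
    UnitAddTorus.mFourierCoeff (boxIndicator a b) n =
      ∏ i, fourierCoeff (arcIndicator (a i) (b i)) (n i) := by
  simp only [fourierCoeff, UnitAddTorus.mFourierCoeff]
  rw [← integral_fintype_prod_eq_prod
    (f := fun i t => fourier (-n i) t • arcIndicator (a i) (b i) t)]
  change ∫ x, _ ∂(Measure.pi fun _ : Fin d => AddCircle.haarAddCircle) = _
  congr 1
  ext x
  simp [UnitAddTorus.mFourier, boxIndicator, Finset.prod_mul_distrib, -fourier_apply]

/-- The projection to the torus of the linear flow in direction `α`. -/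
noncomputable def torusFlow (α : Fin d → ℝ) (t : ℝ) : UnitAddTorus (Fin d) :=
  fun i => ((t * α i : ℝ) : UnitAddCircle)

theorem continuous_torusFlow (α : Fin d → ℝ) : Continuous (torusFlow α) :=
  continuous_pi fun _ => (AddCircle.continuous_mk' 1).comp (by fun_prop)

/-- The time the flow started at `x` spends in the box up to time `T`. -/
noncomputable def flowTime (α a b : Fin d → ℝ) (T : ℝ) (x : UnitAddTorus (Fin d)) : ℂ :=
  ∫ t in (0 : ℝ)..T, boxIndicator a b (x + torusFlow α t)

theorem countable_setOf_add_coe_eq {c : ℝ} (hc : c ≠ 0) (x y : UnitAddCircle) :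
    {t : ℝ | x + ((t * c : ℝ) : UnitAddCircle) = y}.Countable := by
  obtain ⟨s, hs⟩ := QuotientAddGroup.mk_surjective (y - x)
  refine (Set.countable_range fun m : ℤ => (s + m) / c).mono ?_
  intro t ht
  have : ((t * c : ℝ) : UnitAddCircle) = (s : UnitAddCircle) := by
    rw [hs, ← (show _ = y from ht)]; abel
  rw [eq_comm, QuotientAddGroup.eq_iff_sub_mem, AddSubgroup.mem_zmultiples_iff] at this
  obtain ⟨m, hm⟩ := this
  refine ⟨-m, ?_⟩
  simp only [zsmul_eq_mul, mul_one] at hm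
  push_cast
  rw [hm]; field_simp; ring

theorem continuous_flowTime {α : Fin d → ℝ} (hα : ∀ i, α i ≠ 0) (T : ℝ) :
    Continuous (flowTime α a b T) := by
  refine continuous_iff_continuousAt.mpr fun x => ?_
  refine intervalIntegral.continuousAt_of_dominated_interval (bound := fun _ => 1)
    (Eventually.of_forall fun y => ?_)
    (Eventually.of_forall fun y => ae_of_all _ fun t _ => norm_boxIndicator_le _)
    intervalIntegrable_const ?_
  · exact (measurable_boxIndicator.comp
      ((continuous_torusFlow α).measurable.const_add y)).aestronglyMeasurable
  · have hae : ∀ i (c : ℝ), ∀ᵐ t : ℝ,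
        x i + ((t * α i : ℝ) : UnitAddCircle) ≠ (c : UnitAddCircle) := fun i c =>
      (countable_setOf_add_coe_eq (hα i) (x i) c).ae_notMem _
    filter_upwards [ae_all_iff.mpr fun i => hae i 0, ae_all_iff.mpr fun i => hae i (a i),
      ae_all_iff.mpr fun i => hae i (b i)] with t h0 ha hb _
    refine tendsto_finsetProd _ fun i _ => ?_
    exact ContinuousAt.comp (g := arcIndicator (a i) (b i))
      (f := fun y : UnitAddTorus (Fin d) => y i + ((t * α i : ℝ) : UnitAddCircle))
      (continuousAt_arcIndicator (h0 i) (ha i) (hb i))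
      ((continuous_apply i).add continuous_const).continuousAt

theorem mFourier_apply_torusFlow (α : Fin d → ℝ) (n : Fin d → ℤ) (t : ℝ) :
    UnitAddTorus.mFourier n (torusFlow α t) =
      Complex.exp ((2 * π * (∑ i, (n i : ℝ) * α i) * t : ℝ) * Complex.I) := by
  simp only [UnitAddTorus.mFourier, ContinuousMap.coe_mk, torusFlow, fourier_coe_apply]
  rw [← Complex.exp_sum]
  congr 1
  push_cast
  simp only [Finset.mul_sum, Finset.sum_mul]
  refine Finset.sum_congr rfl fun i _ => ?_
  ring

theorem mFourier_apply_add (n : Fin d → ℤ) (x y : UnitAddTorus (Fin d)) :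
    UnitAddTorus.mFourier n (x + y) =
      UnitAddTorus.mFourier n x * UnitAddTorus.mFourier n y := by
  simp [UnitAddTorus.mFourier, Finset.prod_mul_distrib, AddCircle.toCircle_add]

theorem mFourierCoeff_flowTime (α : Fin d → ℝ) {T : ℝ} (hT : 0 ≤ T) (n : Fin d → ℤ) :
    UnitAddTorus.mFourierCoeff (flowTime α a b T) n =
      (∫ t in (0 : ℝ)..T, Complex.exp ((2 * π * (∑ i, (n i : ℝ) * α i) * t : ℝ) * Complex.I)) *
        ∏ i, fourierCoeff (arcIndicator (a i) (b i)) (n i) := by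
  rw [← mFourierCoeff_boxIndicator]
  simp only [UnitAddTorus.mFourierCoeff]
  let μ : Measure (UnitAddTorus (Fin d)) := Measure.pi fun _ => AddCircle.haarAddCircle
  change ∫ x, _ ∂μ = _ * ∫ x, _ ∂μ
  simp only [flowTime, smul_eq_mul, ← intervalIntegral.integral_const_mul]
  have hint : Integrable (Function.uncurry fun (x : UnitAddTorus (Fin d)) (t : ℝ) =>
      UnitAddTorus.mFourier (-n) x * boxIndicator a b (x + torusFlow α t))
      (μ.prod (volume.restrict (Set.Ioc 0 T))) := by
    refine Integrable.of_bound (C := 1) ?_ (ae_of_all _ fun z => ?_)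
    · refine Measurable.aestronglyMeasurable ?_
      exact ((UnitAddTorus.mFourier (-n)).continuous.measurable.comp measurable_fst).mul
        (measurable_boxIndicator.comp
          (measurable_fst.add ((continuous_torusFlow α).measurable.comp measurable_snd)))
    · rw [Function.uncurry, norm_mul]
      exact mul_le_one₀ (((UnitAddTorus.mFourier (-n)).norm_coe_le_norm _).trans
        UnitAddTorus.mFourier_norm.le) (norm_nonneg _) (norm_boxIndicator_le _)
  simp only [intervalIntegral.integral_of_le hT]
  rw [integral_integral_swap hint, ← integral_mul_const]
  congr 1
  ext t
  rw [← mFourier_apply_torusFlow, ← integral_const_mul,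
    ← integral_add_right_eq_self (fun x => UnitAddTorus.mFourier n (torusFlow α t) *
      (UnitAddTorus.mFourier (-n) x * boxIndicator a b x)) (torusFlow α t)]
  congr 1
  ext x
  have h : UnitAddTorus.mFourier n (torusFlow α t) *
      UnitAddTorus.mFourier (-n) (torusFlow α t) = 1 := by
    rw [← UnitAddTorus.mFourier_add, add_neg_cancel, UnitAddTorus.mFourier_zero,
      ContinuousMap.one_apply]
  rw [mFourier_apply_add]
  linear_combination (-UnitAddTorus.mFourier (-n) x * boxIndicator a b (x + torusFlow α t)) * h

theorem norm_flowTime_zero_sub_le {α : Fin d → ℝ}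
    (hne : ∀ n : Fin d → ℤ, n ≠ 0 → ∑ i, (n i : ℝ) * α i ≠ 0)
    (hsum : Summable fun n : Fin d → ℤ =>
      (∏ i, (max 1 |(n i : ℝ)|)⁻¹) / |∑ i, (n i : ℝ) * α i|)
    (ha : ∀ i, 0 ≤ a i) (hab : ∀ i, a i ≤ b i) (hb : ∀ i, b i ≤ 1) {T : ℝ} (hT : 0 ≤ T) :
    ‖flowTime α a b T 0 - T * ∏ i, ((b i - a i : ℝ) : ℂ)‖ ≤
      ∑' n : Fin d → ℤ, (∏ i, (max 1 |(n i : ℝ)|)⁻¹) / |∑ i, (n i : ℝ) * α i| := by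
  have hα : ∀ i, α i ≠ 0 := by
    intro i
    simpa [Pi.single_apply] using hne (Pi.single i 1) (by simp)
  have hbound : ∀ n : Fin d → ℤ, n ≠ 0 → ‖UnitAddTorus.mFourierCoeff (flowTime α a b T) n‖ ≤
      (∏ i, (max 1 |(n i : ℝ)|)⁻¹) / |∑ i, (n i : ℝ) * α i| := by
    intro n hn
    rw [mFourierCoeff_flowTime α hT, norm_mul, norm_prod, div_eq_mul_one_div, mul_comm]
    gcongr with i
    · exact norm_fourierCoeff_arcIndicator_le (ha i) (hab i) (hb i) (n i)
    · exact norm_integral_cexp_mul_I_le (hne n hn) 0 T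
  have hzero : UnitAddTorus.mFourierCoeff (flowTime α a b T) 0 =
      T * ∏ i, ((b i - a i : ℝ) : ℂ) := by
    rw [mFourierCoeff_flowTime α hT]
    simp [fourierCoeff_arcIndicator (ha _) (hab _) (hb _)]
  let F : C(UnitAddTorus (Fin d), ℂ) := ⟨flowTime α a b T, continuous_flowTime hα T⟩
  have hF : Summable (UnitAddTorus.mFourierCoeff F) := by
    refine hsum.of_norm_bounded_eventually ?_
    filter_upwards [(Set.finite_singleton (0 : Fin d → ℤ)).compl_mem_cofinite] with n hn
    exact hbound n hn
  have h := (UnitAddTorus.hasSum_mFourier_series_apply_of_summable hF 0).sub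
    (hasSum_ite_eq (0 : Fin d → ℤ) (UnitAddTorus.mFourierCoeff F 0))
  have hone : ∀ n : Fin d → ℤ, UnitAddTorus.mFourier n (0 : UnitAddTorus (Fin d)) = 1 := by
    intro n
    simp [UnitAddTorus.mFourier]
  have key := h.norm_le_of_bounded hsum.hasSum fun n => ?_
  · rw [← hzero]
    exact key
  · by_cases hn : n = 0
    · subst hn
      simp [hone]
    · rw [hone, smul_eq_mul, mul_one, if_neg hn, sub_zero]
      exact hbound n hn

end Torus

theorem eVariationOn_line_Icc {E : Type*} [NormedAddCommGroup E] [NormedSpace ℝ E] (v : E)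
    {T : ℝ} (hT : 0 ≤ T) :
    eVariationOn (fun t : ℝ => t • v) (Set.Icc 0 T) = ENNReal.ofReal (‖v‖ * T) := by
  apply le_antisymm
  · have hlip : LipschitzWith ‖v‖₊ fun t : ℝ => t • v := by
      refine LipschitzWith.of_dist_le_mul fun x y => ?_
      rw [dist_eq_norm, ← sub_smul, norm_smul, mul_comm, coe_nnnorm, dist_eq_norm]
    refine (hlip.lipschitzOnWith.comp_eVariationOn_le (f := fun t : ℝ => t • v)
      (g := id) (s := Set.Icc 0 T) (Set.mapsTo_univ _ _)).trans ?_
    rw [ENNReal.ofReal_mul (norm_nonneg v), ofReal_norm]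
    gcongr
    · exact le_rfl
    · simpa only [id, sub_zero, Set.inter_self] using
        ((monotoneOn_id (s := Set.Icc 0 T)).eVariationOn_eq (Set.left_mem_Icc.mpr hT)
          (Set.right_mem_Icc.mpr hT)).le
  · refine le_of_eq_of_le ?_ (eVariationOn.edist_le _ (Set.right_mem_Icc.mpr hT)
      (Set.left_mem_Icc.mpr hT))
    rw [edist_dist, dist_eq_norm, zero_smul, sub_zero, norm_smul, mul_comm,
      Real.norm_of_nonneg hT]

theorem ofReal_deltaCurve_line {d : ℕ} (α : Fin d → ℝ) {a b : Fin d → ℝ} (hab : a ≤ b) (T : ℝ) :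
    (DeltaCurve (fun t => t • α) (Set.Icc a b) T : ℂ) =
      flowTime α a b T 0 - T * ∏ i, ((b i - a i : ℝ) : ℂ) := by
  rw [DeltaCurve, Real.volume_Icc_pi_toReal hab, flowTime]
  push_cast
  rw [← intervalIntegral.integral_ofReal]
  congr 3
  ext t
  simp only [boxIndicator, torusFlow, Pi.add_apply, Pi.zero_apply, zero_add, arcIndicator_coe,
    Pi.smul_apply, smul_eq_mul]
  by_cases h : (fun i => Int.fract (t * α i)) ∈ Set.Icc a b
  · rw [Set.indicator_of_mem h, Complex.ofReal_one, Finset.prod_eq_one]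
    intro i _
    rw [Set.indicator_of_mem (Set.mem_Icc.mpr ⟨h.1 i, h.2 i⟩), Pi.one_apply]
  · rw [Set.indicator_of_notMem h, Complex.ofReal_zero, eq_comm, Finset.prod_eq_zero_iff]
    by_contra hcon
    have hmem : ∀ i, Int.fract (t * α i) ∈ Set.Icc (a i) (b i) := fun i => by
      by_contra hi
      exact hcon ⟨i, Finset.mem_univ i, Set.indicator_of_notMem hi _⟩
    exact h ⟨fun i => (hmem i).1, fun i => (hmem i).2⟩

theorem not_frequently_log_rpow_div_le_of_le_div {c C δ : ℝ} (hc : 0 < c) (hδ : 0 < δ)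
    {S : ℝ → ℝ} (hS : ∀ T, 0 < T → S T ≤ C / T) :
    ¬ ∃ c' > 0, ∃ᶠ T : ℝ in atTop, c' * (Real.log (c * T) ^ δ / (c * T)) ≤ S T := by
  rintro ⟨c', hc', hfreq⟩
  have hlim : Tendsto (fun T : ℝ => Real.log (c * T) ^ δ) atTop atTop :=
    (tendsto_rpow_atTop hδ).comp
      (Real.tendsto_log_atTop.comp (tendsto_id.const_mul_atTop hc))
  obtain ⟨T, hT, hlog, hT0⟩ := (hfreq.and_eventually
    ((hlim.eventually_gt_atTop (C * c / c')).and (eventually_gt_atTop 0))).exists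
  have h := hT.trans (hS T hT0)
  rw [← mul_div_assoc, div_le_div_iff₀ (by positivity) hT0] at h
  rw [div_lt_iff₀ hc'] at hlog
  nlinarith

/-- There is no van Aardenne–Ehrenfest type theorem for continuous curves: in every
dimension `d ≥ 2` there is a continuous curve `g` of positive linear arc length
(`ℓ_T = cT`, measured as the Euclidean variation of `g` on `[0,T]`) whose box
discrepancy is bounded; in particular for `d ≥ 3`, `0 < ε < d - 2`, the lower bound
`sup_R |Δ_T(g,R)/T| = Ω((log ℓ_T)^{d-2-ε}/ℓ_T)` fails for this curve. -/
theorem no_van_aardenne_ehrenfest_for_curves {d : ℕ} (hd : 2 ≤ d) :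
    ∃ (g : ℝ → (Fin d → ℝ)) (c C : ℝ), 0 < c ∧ 0 < C ∧
      Continuous g ∧
      (∀ T : ℝ, 0 < T →
        eVariationOn (fun t => (WithLp.equiv 2 (Fin d → ℝ)).symm (g t)) (Set.Icc 0 T) =
          ENNReal.ofReal (c * T)) ∧
      (∀ T : ℝ, 0 < T → ∀ a b : Fin d → ℝ, Set.Icc a b ⊆ Set.Icc 0 1 →
        |DeltaCurve g (Set.Icc a b) T| ≤ C) ∧
      (∀ ε : ℝ, 0 < ε → ε < (d : ℝ) - 2 →
        ¬ ∃ c' > 0, ∃ᶠ T : ℝ in atTop,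
          c' * (Real.log (c * T) ^ ((d : ℝ) - 2 - ε) / (c * T)) ≤
            ⨆ (a : Fin d → ℝ) (b : Fin d → ℝ) (_ : Set.Icc a b ⊆ Set.Icc 0 1),
              |DeltaCurve g (Set.Icc a b) T / T|) := by
  obtain ⟨α, hne, hsum⟩ := exists_summable_small_denominators (d := d) (by omega)
  set S := ∑' n : Fin d → ℤ, (∏ i, (max 1 |(n i : ℝ)|)⁻¹) / |∑ i, (n i : ℝ) * α i|
  have hS0 : 0 ≤ S := tsum_nonneg fun n => by positivity
  have hα : WithLp.toLp 2 α ≠ 0 := by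
    intro h
    have hα0 : α = 0 := by simpa using h
    have : Nonempty (Fin d) := ⟨⟨0, by omega⟩⟩
    exact hne 1 one_ne_zero (by simp [hα0])
  have hc : 0 < ‖WithLp.toLp 2 α‖ := norm_pos_iff.mpr hα
  have hbox : ∀ T : ℝ, 0 < T → ∀ a b : Fin d → ℝ, Set.Icc a b ⊆ Set.Icc 0 1 →
      |DeltaCurve (fun t => t • α) (Set.Icc a b) T| ≤ S + 1 := by
    intro T hT a b hR
    by_cases hab : a ≤ b
    · have ha := hR (Set.left_mem_Icc.mpr hab)
      have hb := hR (Set.right_mem_Icc.mpr hab)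
      rw [← Real.norm_eq_abs, ← Complex.norm_real, ofReal_deltaCurve_line α hab]
      exact (norm_flowTime_zero_sub_le hne hsum ha.1 hab hb.2 hT.le).trans (by linarith)
    · simp only [DeltaCurve, Set.Icc_eq_empty hab, Set.indicator_empty,
        intervalIntegral.integral_zero, measure_empty, ENNReal.toReal_zero, mul_zero, sub_zero,
        abs_zero]
      positivity
  refine ⟨fun t => t • α, ‖WithLp.toLp 2 α‖, S + 1, hc, by positivity, by fun_prop,
    fun T hT => eVariationOn_line_Icc (WithLp.toLp 2 α) hT.le, hbox, fun ε _ hε => ?_⟩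
  refine not_frequently_log_rpow_div_le_of_le_div (C := S + 1) hc (by linarith) fun T hT => ?_
  have hnonneg : 0 ≤ (S + 1) / T := by positivity
  refine Real.iSup_le (fun a => Real.iSup_le (fun b => Real.iSup_le (fun hR => ?_) hnonneg)
    hnonneg) hnonneg
  rw [abs_div, abs_of_pos hT]
  gcongr
  exact hbox T hT a b hR
end
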